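/- For every f : ℝ → ℂ which is 2π-periodic and Lipschitz continuous, the limit as ε → 0⁺ of (1/4)∫_{I³} δ_ε(Ω(x,y,z)) |f(x)+f(y)−f(z)−f(x+y−z)|² dx dy dz exists, is non-negative and finite, and equals ∫_{I²} (1/(2√(F₊(x,z)))) |f(x) + f(h(x,z)) − f(z) − f(x−z+h(x,z))|² dx dz; moreover this quantity is also equal to ∫_{I²} f(x)* (V(x)𝟙(x=z-part as multiplication) + K₁(x,z) − 2K₂(x,z)) f(z) dx dz, i.e. to ∫_I V(x)|f(x)|² dx + ∫_{I²} f(x)* (K₁(x,z) − 2K₂(x,z)) f(z) dx dz. -/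

import Mathlib

open MeasureTheory Real Set Filter
open scoped Topology ENNReal ComplexConjugate

noncomputable section

/-- The fundamental periodic cell `I = [0, 2π)`. -/
def II : Set ℝ := Set.Ico 0 (2 * π)

/-- Lebesgue measure restricted to `I`. -/
def muI : Measure ℝ := volume.restrict II

/-- The dispersion relation `ω(x) = |sin(x/2)|`. -/
def omg (x : ℝ) : ℝ := |Real.sin (x / 2)|

/-- `Ω(x,y,z) = ω(x) + ω(y) − ω(z) − ω(x+y−z)`. -/
def Omg (x y z : ℝ) : ℝ := omg x + omg y - omg z - omg (x + y - z)

/-- The representative of `x` modulo `2π` lying in `[0, 2π)`. -/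
def mod2pi (x : ℝ) : ℝ := x - 2 * π * (⌊x / (2 * π)⌋ : ℝ)

/-- `h` on the fundamental cell: `h(x,z) = (z−x)/2 + 2 arcsin( tan(|z−x|/4) cos((x+z)/4) )`. -/
def h0 (x z : ℝ) : ℝ :=
  (z - x) / 2 + 2 * Real.arcsin (Real.tan (|z - x| / 4) * Real.cos ((x + z) / 4))

/-- The extension of `h` to all of `ℝ²`: `h(x,z) = h(x mod 2π, z mod 2π) − (x − (x mod 2π))`. -/
def hFPU (x z : ℝ) : ℝ := h0 (mod2pi x) (mod2pi z) - (x - mod2pi x)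

/-- `F₊(x,y) = (cos(x/2)+cos(y/2))² + 4 sin(x/2) sin(y/2)`. -/
def Fp (x y : ℝ) : ℝ :=
  (Real.cos (x / 2) + Real.cos (y / 2)) ^ 2 + 4 * Real.sin (x / 2) * Real.sin (y / 2)

/-- `F₋(x,y) = (cos(x/2)+cos(y/2))² − 4 sin(x/2) sin(y/2)`. -/
def Fm (x y : ℝ) : ℝ :=
  (Real.cos (x / 2) + Real.cos (y / 2)) ^ 2 - 4 * Real.sin (x / 2) * Real.sin (y / 2)

/-- The kernel `K₁(x,y) = 4·𝟙(F₋(x,y) > 0)/√(F₋(x,y))`. -/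
def K1 (x y : ℝ) : ℝ := if 0 < Fm x y then 4 / Real.sqrt (Fm x y) else 0

/-- The kernel `K₂(x,y) = 2/√(F₊(x,y))`. -/
def K2 (x y : ℝ) : ℝ := 2 / Real.sqrt (Fp x y)

/-- `V(x) = ∫_I K₂(x,y) dy`. -/
def VV (x : ℝ) : ℝ := ∫ y in II, K2 x y

/-- `W(x) = sin²(x/2)·V(x)`. -/
def WW (x : ℝ) : ℝ := Real.sin (x / 2) ^ 2 * VV x

/-- The regularized delta function `δ_ε(X) = (ε/π)/(ε² + X²)`. -/
def deltaE (ε X : ℝ) : ℝ := (ε / π) / (ε ^ 2 + X ^ 2)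

/-- The limiting quadratic form
`∫_{I²} |f(x)+f(h(x,z))−f(z)−f(x−z+h(x,z))|² / (2√(F₊(x,z))) dx dz`. -/
def Elim (f : ℝ → ℂ) : ℝ :=
  ∫ p in II ×ˢ II,
    (1 / (2 * Real.sqrt (Fp p.1 p.2))) *
      ‖f p.1 + f (hFPU p.1 p.2) - f p.2 - f (p.1 - p.2 + hFPU p.1 p.2)‖ ^ 2

/-!
The regularized form lives on the cube `(0, 2π)³`, which splits according to the branch of
`ω(x + y - z)`.

* Where `0 ≤ x + y - z ≤ 2π`, the energy defect factors as
  `Ω = 4 sin((x+y)/4) sin((x-z)/4) sin((y-z)/4)`, while the Lipschitz bound makes the squared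
  collision term `O(|x-z| |y-z|)`. Hence `δ_ε(Ω) |…|²` is dominated by the integrable function
  `1 / sin((x+y)/4)` and tends to `0` pointwise: the trivial resonances `x = z` and `y = z` do not
  contribute.
* Where `x + y < z`, the map `y ↦ Ω(x, y, z)` is increasing with zero `h(x, z)`, and its slope there
  is `√F₊(x, z) / 2`, so integrating `δ_ε(Ω)` in `y` concentrates at `h(x, z)` with weight
  `2 / √F₊`.
* The part `x + y > z + 2π` is the image of the previous one under `x ↦ 2π - x`.

For the kernel formula, put `σ(u, v) = arctan(cos v / cos u)` on the diamond `|u| + |v| < π/2`. The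
four legs of a nontrivial resonance are `x = 2σ + 2u`, `h = 2σ - 2u`, `z = π + 2σ - 2v` and
`x + h - z = π + 2σ + 2v - 2π`. In these coordinates `dx dz / (2√F₊)` becomes a finite measure
invariant under `u ↦ -u`, `v ↦ -v` and `u ↔ v`, and in the coordinates `(x, h)` it is proportional
to `K₁ dx dh`. Expanding the square, these symmetries identify the diagonal terms with `V`,
the correlations of `x` with `h` with `K₁`, and those of `x` with `z` with `K₂`.
-/

/-! ### The kernels and their integrability -/

lemma sin_half_pos {x : ℝ} (hx : x ∈ Ioo 0 (2 * π)) : 0 < sin (x / 2) :=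
  sin_pos_of_pos_of_lt_pi (by linarith [hx.1]) (by linarith [hx.2])

lemma omg_eq_sin_half {x : ℝ} (hx : x ∈ Icc 0 (2 * π)) : omg x = sin (x / 2) :=
  abs_of_nonneg (sin_nonneg_of_nonneg_of_le_pi (by linarith [hx.1]) (by linarith [hx.2]))

lemma omg_neg (x : ℝ) : omg (-x) = omg x := by
  rw [omg, omg, neg_div, sin_neg, abs_neg]

lemma periodic_omg : Function.Periodic omg (2 * π) := fun x ↦ by
  rw [omg, omg, show (x + 2 * π) / 2 = x / 2 + π by ring, sin_add_pi, abs_neg]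

@[fun_prop]
lemma continuous_omg : Continuous omg := by unfold omg; fun_prop

lemma continuous_Omg : Continuous fun p : ℝ × ℝ × ℝ ↦ Omg p.1 p.2.1 p.2.2 := by
  unfold Omg; fun_prop

lemma Omg_two_pi_sub (x y z : ℝ) : Omg (2 * π - x) (2 * π - y) (2 * π - z) = Omg x y z := by
  have reflect (t : ℝ) : omg (2 * π - t) = omg t := by rw [periodic_omg.sub_eq', omg_neg]
  rw [Omg, Omg, show 2 * π - x + (2 * π - y) - (2 * π - z) = 2 * π - (x + y - z) by ring]
  simp only [reflect]

lemma Fp_comm (x z : ℝ) : Fp x z = Fp z x := by unfold Fp; ring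

lemma K2_comm (x z : ℝ) : K2 x z = K2 z x := by rw [K2, Fp_comm, K2]

lemma Fp_two_pi_sub (x z : ℝ) : Fp (2 * π - x) (2 * π - z) = Fp x z := by
  simp only [Fp, sub_div, mul_div_cancel_left₀ π two_ne_zero, cos_pi_sub, sin_pi_sub]
  ring

lemma Fm_two_pi_sub (x z : ℝ) : Fm (2 * π - x) (2 * π - z) = Fm x z := by
  simp only [Fm, sub_div, mul_div_cancel_left₀ π two_ne_zero, cos_pi_sub, sin_pi_sub]
  ring

lemma K1_two_pi_sub (x z : ℝ) : K1 (2 * π - x) (2 * π - z) = K1 x z := by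
  rw [K1, Fm_two_pi_sub, K1]

lemma sin_mul_sin_le_Fp {x z : ℝ} (hx : x ∈ Ioo 0 (2 * π)) (hz : z ∈ Ioo 0 (2 * π)) :
    sin (x / 2) * sin (z / 2) ≤ Fp x z := by
  have := mul_pos (sin_half_pos hx) (sin_half_pos hz)
  unfold Fp
  linarith [sq_nonneg (cos (x / 2) + cos (z / 2))]

lemma Fp_pos {x z : ℝ} (hx : x ∈ Ioo 0 (2 * π)) (hz : z ∈ Ioo 0 (2 * π)) : 0 < Fp x z :=
  (mul_pos (sin_half_pos hx) (sin_half_pos hz)).trans_le (sin_mul_sin_le_Fp hx hz)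

lemma measurable_Fp : Measurable fun p : ℝ × ℝ ↦ Fp p.1 p.2 := by unfold Fp; fun_prop

lemma measurable_Fm : Measurable fun p : ℝ × ℝ ↦ Fm p.1 p.2 := by unfold Fm; fun_prop

lemma II_ae_eq_Ioo : II =ᵐ[volume] Ioo 0 (2 * π) := Ioo_ae_eq_Ico.symm

lemma II_prod_II_ae_eq : (II ×ˢ II : Set (ℝ × ℝ)) =ᵐ[volume] Ioo 0 (2 * π) ×ˢ Ioo 0 (2 * π) :=
  Measure.set_prod_ae_eq II_ae_eq_Ioo II_ae_eq_Ioo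

lemma one_div_sqrt_sin_half_le {x : ℝ} (hx0 : 0 ≤ x) (hxπ : x ≤ π) :
    1 / √(sin (x / 2)) ≤ √π * x ^ (-(1 / 2) : ℝ) := by
  rcases hx0.eq_or_lt with rfl | hx
  · simp
  have jordan : x / π ≤ sin (x / 2) :=
    calc x / π = 2 / π * (x / 2) := by ring
      _ ≤ sin (x / 2) := mul_le_sin (by linarith) (by linarith)
  calc 1 / √(sin (x / 2)) ≤ 1 / √(x / π) := by gcongr
    _ = √π * x ^ (-(1 / 2) : ℝ) := by
      rw [rpow_neg hx.le, ← sqrt_eq_rpow, sqrt_div hx.le]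
      field_simp

lemma integrableOn_one_div_sqrt_sin_half : IntegrableOn (fun x ↦ 1 / √(sin (x / 2))) II := by
  have left : IntervalIntegrable (fun x ↦ 1 / √(sin (x / 2))) volume 0 π := by
    rw [intervalIntegrable_iff_integrableOn_Ioc_of_le pi_nonneg]
    have power := (intervalIntegral.intervalIntegrable_rpow' (a := 0) (b := π)
      (r := -(1 / 2)) (by norm_num)).const_mul √π
    rw [intervalIntegrable_iff_integrableOn_Ioc_of_le pi_nonneg] at power
    refine Integrable.mono' power (Measurable.aestronglyMeasurable (by fun_prop)) ?_
    refine ae_restrict_of_forall_mem measurableSet_Ioc fun x hx ↦ ?_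
    rw [norm_of_nonneg (by positivity)]
    exact one_div_sqrt_sin_half_le hx.1.le hx.2
  have right : IntervalIntegrable (fun x ↦ 1 / √(sin (x / 2))) volume π (2 * π) := by
    have := (left.comp_sub_left (2 * π)).symm
    simpa only [sub_zero, two_mul, add_sub_cancel_right, sub_div, add_halves, add_div,
      sin_pi_sub] using this
  rw [II, ← intervalIntegrable_iff_integrableOn_Ico_of_le two_pi_pos.le]
  exact left.trans right

lemma integrableOn_one_div_sqrt_of_sin_mul_sin_le {F : ℝ × ℝ → ℝ} (hF : Measurable F)
    (hle : ∀ x ∈ Ioo 0 (2 * π), ∀ z ∈ Ioo 0 (2 * π), sin (x / 2) * sin (z / 2) ≤ F (x, z)) :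
    IntegrableOn (fun p ↦ 1 / √(F p)) (II ×ˢ II) := by
  have dominating := Integrable.mul_prod integrableOn_one_div_sqrt_sin_half
    integrableOn_one_div_sqrt_sin_half
  rw [Measure.prod_restrict, ← Measure.volume_eq_prod, ← IntegrableOn] at dominating
  rw [integrableOn_congr_set_ae II_prod_II_ae_eq] at dominating ⊢
  refine Integrable.mono' dominating (measurable_const.div hF.sqrt).aestronglyMeasurable ?_
  refine ae_restrict_of_forall_mem (measurableSet_Ioo.prod measurableSet_Ioo) fun p hp ↦ ?_
  have hx := sin_half_pos hp.1
  have hz := sin_half_pos hp.2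
  rw [norm_of_nonneg (by positivity), div_mul_div_comm, one_mul, ← sqrt_mul hx.le]
  gcongr
  exact hle p.1 hp.1 p.2 hp.2

lemma integrableOn_one_div_sqrt_Fp : IntegrableOn (fun p ↦ 1 / √(Fp p.1 p.2)) (II ×ˢ II) :=
  integrableOn_one_div_sqrt_of_sin_mul_sin_le measurable_Fp fun _ hx _ hz ↦ sin_mul_sin_le_Fp hx hz

lemma integrableOn_K2 : IntegrableOn (fun p ↦ K2 p.1 p.2) (II ×ˢ II) := by
  simpa only [IntegrableOn, K2, mul_one_div] using integrableOn_one_div_sqrt_Fp.const_mul 2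

lemma sin_mul_sin_le_sin_half_add_sq (a b : ℝ) : sin a * sin b ≤ sin ((a + b) / 2) ^ 2 := by
  have product : 2 * sin a * sin b = cos (a - b) - cos (a + b) := two_mul_sin_mul_sin a b
  have double : cos (a + b) = 1 - 2 * sin ((a + b) / 2) ^ 2 := by
    rw [← cos_two_mul_eq_one_sub, mul_div_cancel₀ _ two_ne_zero]
  linarith [cos_le_one (a - b)]

lemma integrableOn_one_div_sin_quarter_add :
    IntegrableOn (fun p : ℝ × ℝ ↦ 1 / sin ((p.1 + p.2) / 4)) (II ×ˢ II) := by
  have hsq := integrableOn_one_div_sqrt_of_sin_mul_sin_le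
    (F := fun p ↦ sin ((p.1 + p.2) / 4) ^ 2) (by fun_prop) fun x _ z _ ↦ by
      convert sin_mul_sin_le_sin_half_add_sq (x / 2) (z / 2) using 3
      ring
  refine hsq.congr_fun (fun p hp ↦ ?_) (measurableSet_Ico.prod measurableSet_Ico)
  have hsin : 0 ≤ sin ((p.1 + p.2) / 4) := sin_nonneg_of_nonneg_of_le_pi
    (by linarith [hp.1.1, hp.2.1]) (by linarith [hp.1.2, hp.2.2])
  simp only [sqrt_sq hsin]

/-! ### The resonance `h` -/

/-- The open triangle `0 < x < z < 2π`, the half of the square `I²` on which the resonance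
`y = h(x, z)` satisfies `x + y < z`. -/
def triangle : Set (ℝ × ℝ) := {p | 0 < p.1 ∧ p.1 < p.2 ∧ p.2 < 2 * π}

/-- The smooth function of `y` with which `Ω(x, y, z)` coincides where `x + y ≤ z`. -/
def phase (x z y : ℝ) : ℝ := sin (x / 2) + sin (y / 2) - sin (z / 2) + sin ((x + y - z) / 2)

lemma isOpen_triangle : IsOpen triangle :=
  (isOpen_lt continuous_const continuous_fst).inter
    ((isOpen_lt continuous_fst continuous_snd).inter (isOpen_lt continuous_snd continuous_const))

lemma triangle_subset_Ioo_prod : triangle ⊆ Ioo 0 (2 * π) ×ˢ Ioo 0 (2 * π) :=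
  fun _ ⟨hx, hxz, hz⟩ ↦ ⟨⟨hx, hxz.trans hz⟩, ⟨hx.trans hxz, hz⟩⟩

lemma triangle_subset_II_prod : triangle ⊆ II ×ˢ II :=
  triangle_subset_Ioo_prod.trans (prod_mono Ioo_subset_Ico_self Ioo_subset_Ico_self)

lemma Fp_pos_of_mem_triangle {x z : ℝ} (h : (x, z) ∈ triangle) : 0 < Fp x z :=
  Fp_pos (triangle_subset_Ioo_prod h).1 (triangle_subset_Ioo_prod h).2

lemma mod2pi_of_mem_II {x : ℝ} (hx : x ∈ II) : mod2pi x = x := by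
  have : ⌊x / (2 * π)⌋ = 0 := Int.floor_eq_zero_iff.2
    ⟨div_nonneg hx.1 two_pi_pos.le, (div_lt_one two_pi_pos).2 hx.2⟩
  simp [mod2pi, this]

lemma hFPU_eq_h0 {x z : ℝ} (hx : x ∈ II) (hz : z ∈ II) : hFPU x z = h0 x z := by
  rw [hFPU, mod2pi_of_mem_II hx, mod2pi_of_mem_II hz, sub_self, sub_zero]

lemma measurable_h0 : Measurable fun p : ℝ × ℝ ↦ h0 p.1 p.2 := by
  have arg : Measurable fun p : ℝ × ℝ ↦ tan (|p.2 - p.1| / 4) * cos ((p.1 + p.2) / 4) := by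
    simp only [tan_eq_sin_div_cos]
    fun_prop
  exact (by fun_prop : Measurable fun p : ℝ × ℝ ↦ (p.2 - p.1) / 2).add
    ((measurable_arcsin.comp arg).const_mul 2)

lemma h0_two_pi_sub (x z : ℝ) : h0 (2 * π - x) (2 * π - z) = -h0 x z := by
  rw [h0, h0, sub_sub_sub_cancel_left, abs_sub_comm,
    show (2 * π - x + (2 * π - z)) / 4 = π - (x + z) / 4 by ring, cos_pi_sub, mul_neg, arcsin_neg]
  ring

lemma h0_eq_of_lt {x z : ℝ} (hxz : x < z) :
    h0 x z = (z - x) / 2 + 2 * arcsin (tan ((z - x) / 4) * cos ((x + z) / 4)) := by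
  rw [h0, abs_of_pos (sub_pos.2 hxz)]

lemma cos_quarter_sub_pos {x z : ℝ} (h : (x, z) ∈ triangle) : 0 < cos ((z - x) / 4) :=
  cos_pos_of_mem_Ioo ⟨by linarith [h.1, h.2.1, h.2.2], by linarith [h.1, h.2.1, h.2.2]⟩

lemma h0_mem_Ioo {x z : ℝ} (h : (x, z) ∈ triangle) : h0 x z ∈ Ioo 0 (z - x) := by
  have hcos := cos_quarter_sub_pos h
  obtain ⟨hx, hxz, hz⟩ : 0 < x ∧ x < z ∧ z < 2 * π := h
  rw [h0_eq_of_lt hxz]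
  set q := (z - x) / 4 with hq
  set s := (x + z) / 4 with hs
  have htan : 0 < tan q := tan_pos_of_pos_of_lt_pi_div_two (by linarith) (by linarith)
  have cos_s_lt : cos s < cos q :=
    cos_lt_cos_of_nonneg_of_le_pi (by linarith) (by linarith) (by linarith)
  have neg_cos_q_lt : -cos q < cos s := by
    rw [← cos_pi_sub]
    exact cos_lt_cos_of_nonneg_of_le_pi (by linarith) (by linarith) (by linarith)
  have arcsin_lt : arcsin (tan q * cos s) < q := by
    rw [arcsin_lt_iff_lt_sin' ⟨by linarith, by linarith⟩, ← tan_mul_cos hcos.ne']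
    exact mul_lt_mul_of_pos_left cos_s_lt htan
  have lt_arcsin : -q < arcsin (tan q * cos s) := by
    rw [lt_arcsin_iff_sin_lt' ⟨by linarith, by linarith⟩, sin_neg, ← tan_mul_cos hcos.ne',
      ← mul_neg]
    exact mul_lt_mul_of_pos_left neg_cos_q_lt htan
  constructor <;> linarith

lemma phase_eq (x z y : ℝ) :
    phase x z y = 2 * (cos ((z - x) / 4) * sin (y / 2 - (z - x) / 4) -
      sin ((z - x) / 4) * cos ((x + z) / 4)) := by
  have first : sin (x / 2) - sin (z / 2) = 2 * sin (-((z - x) / 4)) * cos ((x + z) / 4) := by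
    rw [sin_sub_sin]; ring_nf
  have second : sin (y / 2) + sin ((x + y - z) / 2) =
      2 * sin (y / 2 - (z - x) / 4) * cos ((z - x) / 4) := by
    rw [two_mul_sin_mul_cos]; ring_nf
  rw [sin_neg] at first
  unfold phase
  linarith

lemma h0_eq_of_phase_eq_zero {x z y : ℝ} (h : (x, z) ∈ triangle) (hy : y ∈ Icc 0 (z - x))
    (hzero : phase x z y = 0) : h0 x z = y := by
  have hcos := cos_quarter_sub_pos h
  obtain ⟨hx, hxz, hz⟩ : 0 < x ∧ x < z ∧ z < 2 * π := h
  have root : tan ((z - x) / 4) * cos ((x + z) / 4) = sin (y / 2 - (z - x) / 4) := by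
    rw [tan_eq_sin_div_cos, div_mul_eq_mul_div, div_eq_iff hcos.ne']
    linarith [phase_eq x z y]
  rw [h0_eq_of_lt hxz, root, arcsin_sin (by linarith [hy.1]) (by linarith [hy.2])]
  ring

lemma phase_h0 {x z : ℝ} (h : (x, z) ∈ triangle) : phase x z (h0 x z) = 0 := by
  have hcos := cos_quarter_sub_pos h
  have hmem := h0_mem_Ioo h
  obtain ⟨hx, hxz, hz⟩ : 0 < x ∧ x < z ∧ z < 2 * π := h
  rw [h0_eq_of_lt hxz] at hmem
  rw [phase_eq, h0_eq_of_lt hxz]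
  set q := (z - x) / 4 with hq
  set a := tan q * cos ((x + z) / 4) with ha
  have sin_arcsin_a : sin (arcsin a) = a := by
    have hlt := arcsin_lt_pi_div_two.1 (show arcsin a < π / 2 by linarith [hmem.2])
    have hgt := neg_pi_div_two_lt_arcsin.1 (show -(π / 2) < arcsin a by linarith [hmem.1])
    exact sin_arcsin hgt.le hlt.le
  rw [show ((z - x) / 2 + 2 * arcsin a) / 2 - q = arcsin a by rw [hq]; ring, sin_arcsin_a, ha,
    ← mul_assoc, mul_comm (cos q), tan_mul_cos hcos.ne', sub_self, mul_zero]

lemma hasDerivAt_phase (x z y : ℝ) :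
    HasDerivAt (phase x z) ((cos (y / 2) + cos ((x + y - z) / 2)) / 2) y := by
  have first := ((hasDerivAt_id y).div_const 2).sin
  have second := ((((hasDerivAt_id y).const_add x).sub_const z).div_const 2).sin
  refine (((first.const_add (sin (x / 2))).sub_const (sin (z / 2))).add second).congr_deriv ?_
  simp only [id_eq]
  ring

/-- Since `√(F₊(x, z)) / 2` is the derivative of the phase at its zero, the weight `δ(Ω)` gives to
the resonance is `2 / √(F₊(x, z))`. -/
lemma sqrt_Fp_eq {x z : ℝ} (h : (x, z) ∈ triangle) :
    √(Fp x z) = cos (h0 x z / 2) + cos ((x + h0 x z - z) / 2) := by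
  have hcos := cos_quarter_sub_pos h
  have hmem := h0_mem_Ioo h
  have hroot := phase_h0 h
  obtain ⟨hx, hxz, hz⟩ : 0 < x ∧ x < z ∧ z < 2 * π := h
  rw [phase_eq] at hroot
  set q := (z - x) / 4 with hq
  set t := h0 x z / 2 - q with ht
  have hcos' : 0 < cos t := cos_pos_of_mem_Ioo ⟨by linarith [hmem.1], by linarith [hmem.2]⟩
  have product : cos (h0 x z / 2) + cos ((x + h0 x z - z) / 2) = 2 * (cos t * cos q) := by
    rw [← mul_assoc, two_mul_cos_mul_cos, add_comm]
    congr 2 <;> ring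
  have Fp_eq : Fp x z = 4 * (cos q ^ 2 - (sin q * cos ((x + z) / 4)) ^ 2) := by
    rw [Fp, show x / 2 = (x + z) / 4 - q by ring, show z / 2 = (x + z) / 4 + q by ring,
      cos_sub, cos_add, sin_sub, sin_add]
    linear_combination (4 * cos q ^ 2) * sin_sq_add_cos_sq ((x + z) / 4)
  rw [product, sqrt_eq_iff_mul_self_eq_of_pos (by positivity), Fp_eq,
    show sin q * cos ((x + z) / 4) = cos q * sin t by linarith]
  linear_combination 4 * cos q ^ 2 * sin_sq_add_cos_sq t

/-! ### Resonant coordinates -/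

/-- The domain of the resonant coordinates `(u, v)`. -/
def diamond : Set (ℝ × ℝ) := {p | |p.1| + |p.2| < π / 2}

/-- The angle `σ = (x + y) / 4` of the resonant quadruple `(x, y, z, x + y - z)` with resonant
coordinates `p = (u, v)`; the resonance condition reads `sin σ cos u = cos σ cos v`. -/
def meanAngle (p : ℝ × ℝ) : ℝ := arctan (cos p.2 / cos p.1)

/-- The first incoming wave number `x` in resonant coordinates. -/
def legX (p : ℝ × ℝ) : ℝ := 2 * meanAngle p + 2 * p.1

/-- The second incoming wave number `y = h(x, z)` in resonant coordinates. -/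
def legY (p : ℝ × ℝ) : ℝ := 2 * meanAngle p - 2 * p.1

/-- The first outgoing wave number `z` in resonant coordinates. -/
def legZ (p : ℝ × ℝ) : ℝ := π + 2 * meanAngle p - 2 * p.2

/-- The second outgoing wave number in resonant coordinates, normalised as `x + y - z + 2π`. -/
def legW (p : ℝ × ℝ) : ℝ := π + 2 * meanAngle p + 2 * p.2

/-- The chart in which the weight `1 / (2 √F₊)` becomes `diamondWeight`. -/
def chartXZ (p : ℝ × ℝ) : ℝ × ℝ := (legX p, legZ p)

/-- The chart in which, on the half `0 < v` of the diamond, the kernel `K₁` becomes eight times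
`diamondWeight`. -/
def chartXY (p : ℝ × ℝ) : ℝ × ℝ := (legX p, legY p)

/-- The Lebesgue density, in resonant coordinates, of the resonant collisions. -/
def diamondWeight (p : ℝ × ℝ) : ℝ := 2 / √(cos p.1 ^ 2 + cos p.2 ^ 2)

lemma isOpen_diamond : IsOpen diamond := isOpen_lt (by fun_prop) (by fun_prop)

lemma cos_fst_pos {p : ℝ × ℝ} (hp : p ∈ diamond) : 0 < cos p.1 :=
  cos_pos_of_mem_Ioo (abs_lt.1 (by linarith [abs_nonneg p.2, show |p.1| + |p.2| < π / 2 from hp]))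

lemma cos_snd_pos {p : ℝ × ℝ} (hp : p ∈ diamond) : 0 < cos p.2 :=
  cos_pos_of_mem_Ioo (abs_lt.1 (by linarith [abs_nonneg p.1, show |p.1| + |p.2| < π / 2 from hp]))

lemma swap_mem_diamond {p : ℝ × ℝ} : p.swap ∈ diamond ↔ p ∈ diamond := by
  simp only [diamond, mem_ofPred_eq, Prod.fst_swap, Prod.snd_swap, add_comm]

lemma measurable_meanAngle : Measurable meanAngle := by
  unfold meanAngle
  exact measurable_arctan.comp (by fun_prop)

lemma meanAngle_swap {p : ℝ × ℝ} (hp : p ∈ diamond) : meanAngle p.swap = π / 2 - meanAngle p := by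
  rw [meanAngle, meanAngle, ← arctan_inv_of_pos (div_pos (cos_snd_pos hp) (cos_fst_pos hp)),
    inv_div, Prod.fst_swap, Prod.snd_swap]

lemma abs_fst_lt_meanAngle {p : ℝ × ℝ} (hp : p ∈ diamond) : |p.1| < meanAngle p := by
  have hcos := cos_fst_pos hp
  have hsum : |p.1| + |p.2| < π / 2 := hp
  rw [meanAngle, ← arctan_tan (x := |p.1|) (by linarith [abs_nonneg p.1, pi_pos])
    (by linarith [abs_nonneg p.2])]
  apply arctan_strictMono
  rw [tan_eq_sin_div_cos, cos_abs]
  gcongr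
  rw [← cos_abs p.2, ← sin_pi_div_two_sub]
  exact sin_lt_sin_of_lt_of_le_pi_div_two (by linarith [abs_nonneg p.1, pi_pos])
    (by linarith [abs_nonneg p.2]) (by linarith)

lemma meanAngle_lt {p : ℝ × ℝ} (hp : p ∈ diamond) : meanAngle p < π / 2 - |p.2| := by
  have := abs_fst_lt_meanAngle (swap_mem_diamond.2 hp)
  rw [meanAngle_swap hp, Prod.fst_swap] at this
  linarith

lemma cos_sq_add_cos_sq_pos {p : ℝ × ℝ} (hp : p ∈ diamond) : 0 < cos p.1 ^ 2 + cos p.2 ^ 2 := by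
  have := cos_fst_pos hp
  positivity

lemma cos_meanAngle {p : ℝ × ℝ} (hp : p ∈ diamond) :
    cos (meanAngle p) = cos p.1 / √(cos p.1 ^ 2 + cos p.2 ^ 2) := by
  have hcos := cos_fst_pos hp
  have hsum := cos_sq_add_cos_sq_pos hp
  rw [meanAngle, cos_arctan, show 1 + (cos p.2 / cos p.1) ^ 2 =
    (cos p.1 ^ 2 + cos p.2 ^ 2) / cos p.1 ^ 2 by field_simp, sqrt_div hsum.le, sqrt_sq hcos.le]
  field_simp

lemma sin_meanAngle {p : ℝ × ℝ} (hp : p ∈ diamond) :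
    sin (meanAngle p) = cos p.2 / √(cos p.1 ^ 2 + cos p.2 ^ 2) := by
  have := cos_meanAngle (swap_mem_diamond.2 hp)
  rwa [meanAngle_swap hp, cos_pi_div_two_sub, Prod.fst_swap, Prod.snd_swap, add_comm] at this

lemma meanAngle_eq {p : ℝ × ℝ} {t : ℝ} (hp : 0 < cos p.1) (ht : t ∈ Ioo 0 (π / 2))
    (h : sin t * cos p.1 = cos t * cos p.2) : meanAngle p = t := by
  have hcos : 0 < cos t := cos_pos_of_mem_Ioo ⟨by linarith [ht.1, pi_pos], ht.2⟩
  rw [meanAngle, ← arctan_tan (x := t) (by linarith [ht.1, pi_pos]) ht.2, tan_eq_sin_div_cos]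
  congr 1
  rw [div_eq_div_iff hp.ne' hcos.ne']
  linarith

lemma phase_legs (σ u v : ℝ) :
    phase (2 * σ + 2 * u) (π + 2 * σ - 2 * v) (2 * σ - 2 * u) =
      2 * (sin σ * cos u - cos σ * cos v) := by
  unfold phase
  rw [show (2 * σ + 2 * u) / 2 = σ + u by ring, show (2 * σ - 2 * u) / 2 = σ - u by ring,
    show (π + 2 * σ - 2 * v) / 2 = σ - v + π / 2 by ring,
    show (2 * σ + 2 * u + (2 * σ - 2 * u) - (π + 2 * σ - 2 * v)) / 2 = σ + v - π / 2 by ring,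
    sin_add_pi_div_two, sin_sub_pi_div_two, sin_add, sin_sub, cos_add, cos_sub]
  ring

lemma chartXZ_mem_triangle {p : ℝ × ℝ} (hp : p ∈ diamond) : chartXZ p ∈ triangle := by
  have hu := abs_lt.1 (abs_fst_lt_meanAngle hp)
  have hv := abs_lt.1 (lt_sub_comm.1 (meanAngle_lt hp))
  refine ⟨?_, ?_, ?_⟩ <;> simp only [chartXZ, legX, legZ] <;>
    linarith [hu.1, hu.2, hv.1, hv.2]

lemma h0_chartXZ {p : ℝ × ℝ} (hp : p ∈ diamond) : h0 (legX p) (legZ p) = legY p := by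
  have hu := abs_lt.1 (abs_fst_lt_meanAngle hp)
  have hv := abs_lt.1 (lt_sub_comm.1 (meanAngle_lt hp))
  apply h0_eq_of_phase_eq_zero (chartXZ_mem_triangle hp)
  · simp only [legX, legY, legZ]
    constructor <;> linarith [hu.1, hu.2, hv.1, hv.2]
  · rw [legX, legY, legZ, phase_legs, sin_meanAngle hp, cos_meanAngle hp]
    ring

/-- The inverse of `chartXZ`. -/
def chartXZInv (p : ℝ × ℝ) : ℝ × ℝ :=
  ((p.1 - h0 p.1 p.2) / 4, π / 2 + (p.1 + h0 p.1 p.2 - 2 * p.2) / 4)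

lemma leftInvOn_chartXZInv : LeftInvOn chartXZInv chartXZ diamond := fun p hp ↦ by
  simp only [chartXZInv, chartXZ, h0_chartXZ hp]
  ext <;> simp only [legX, legY, legZ] <;> ring

lemma chartXZInv_mem_diamond {p : ℝ × ℝ} (hp : p ∈ triangle) : chartXZInv p ∈ diamond := by
  have hy := h0_mem_Ioo hp
  obtain ⟨hx, -, hz⟩ := hp
  have hu : |(p.1 - h0 p.1 p.2) / 4| < (p.1 + h0 p.1 p.2) / 4 :=
    abs_lt.2 ⟨by linarith [hy.1], by linarith [hy.1]⟩
  have hv : |π / 2 + (p.1 + h0 p.1 p.2 - 2 * p.2) / 4| < π / 2 - (p.1 + h0 p.1 p.2) / 4 :=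
    abs_lt.2 ⟨by linarith, by linarith [hy.2]⟩
  change |(p.1 - h0 p.1 p.2) / 4| + |π / 2 + (p.1 + h0 p.1 p.2 - 2 * p.2) / 4| < π / 2
  linarith

lemma rightInvOn_chartXZInv : RightInvOn chartXZInv chartXZ triangle := fun p hp ↦ by
  have hy := h0_mem_Ioo hp
  have hmem := chartXZInv_mem_diamond hp
  have hphase := phase_legs ((p.1 + h0 p.1 p.2) / 4) (chartXZInv p).1 (chartXZInv p).2
  have hzero : phase p.1 p.2 (h0 p.1 p.2) = 0 := phase_h0 hp
  obtain ⟨hx, -, hz⟩ := hp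
  have angle : meanAngle (chartXZInv p) = (p.1 + h0 p.1 p.2) / 4 := by
    refine meanAngle_eq (cos_fst_pos hmem) ⟨by linarith [hy.1], by linarith [hy.2]⟩ ?_
    simp only [chartXZInv] at hphase ⊢
    ring_nf at hphase hzero ⊢
    linarith
  rw [chartXZ, legX, legZ, angle]
  ext <;> simp only [chartXZInv] <;> ring

lemma image_chartXZ : chartXZ '' diamond = triangle :=
  Subset.antisymm (image_subset_iff.2 fun _ ↦ chartXZ_mem_triangle)
    fun p hp ↦ ⟨chartXZInv p, chartXZInv_mem_diamond hp, rightInvOn_chartXZInv hp⟩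

/-- The part of the square `x + y < 2π` on which the kernel `K₁` does not vanish. -/
def collisionRegion : Set (ℝ × ℝ) :=
  {p | 0 < p.1 ∧ 0 < p.2 ∧ p.1 + p.2 < 2 * π ∧ 0 < Fm p.1 p.2}

lemma Fm_eq (σ u : ℝ) :
    Fm (2 * σ + 2 * u) (2 * σ - 2 * u) = 4 * (cos σ ^ 2 - sin σ ^ 2 * cos u ^ 2) := by
  rw [Fm, show (2 * σ + 2 * u) / 2 = σ + u by ring, show (2 * σ - 2 * u) / 2 = σ - u by ring,
    cos_sub, cos_add, sin_sub, sin_add]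
  linear_combination (4 * cos σ ^ 2) * sin_sq_add_cos_sq u

lemma sin_snd_pos {p : ℝ × ℝ} (hp : p ∈ diamond) (hv : 0 < p.2) : 0 < sin p.2 :=
  sin_pos_of_pos_of_lt_pi hv
    (by linarith [le_abs_self p.2, abs_nonneg p.1, pi_pos, show |p.1| + |p.2| < π / 2 from hp])

lemma Fm_chartXY {p : ℝ × ℝ} (hp : p ∈ diamond) :
    Fm (legX p) (legY p) = (2 * cos p.1 * sin p.2 / √(cos p.1 ^ 2 + cos p.2 ^ 2)) ^ 2 := by
  have hsum := cos_sq_add_cos_sq_pos hp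
  rw [legX, legY, Fm_eq, cos_meanAngle hp, sin_meanAngle hp, div_pow, div_pow, div_pow,
    sq_sqrt hsum.le]
  field_simp
  linear_combination (-4 * cos p.1 ^ 2) * sin_sq_add_cos_sq p.2

lemma injOn_chartXY : InjOn chartXY (diamond ∩ {p | 0 < p.2}) := by
  rintro ⟨u, v⟩ ⟨hp, hv : 0 < v⟩ ⟨u', v'⟩ ⟨hq, hv' : 0 < v'⟩ h
  simp only [chartXY, legX, legY, Prod.mk.injEq] at h
  obtain rfl : u = u' := by linarith [h.1, h.2]
  have hangle : meanAngle (u, v) = meanAngle (u, v') := by linarith [h.1]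
  have hcos : cos v = cos v' := (div_left_inj' (cos_fst_pos hp).ne').1 (arctan_injective hangle)
  have hp' : |u| + |v| < π / 2 := hp
  have hq' : |u| + |v'| < π / 2 := hq
  rw [injOn_cos ⟨hv.le, by linarith [le_abs_self v, abs_nonneg u, pi_pos]⟩
    ⟨hv'.le, by linarith [le_abs_self v', abs_nonneg u, pi_pos]⟩ hcos]

lemma exists_cos_eq {σ u : ℝ} (hσ : σ < π / 2) (hu : |u| < σ) (hF : sin σ * cos u < cos σ) :
    ∃ v, (u, v) ∈ diamond ∧ 0 < v ∧ sin σ * cos u = cos σ * cos v := by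
  have hσ0 : 0 < σ := (abs_nonneg u).trans_lt hu
  have hcosσ : 0 < cos σ := cos_pos_of_mem_Ioo ⟨by linarith, hσ⟩
  have hsinσ : 0 < sin σ := sin_pos_of_pos_of_lt_pi hσ0 (by linarith)
  have hcosu : 0 < cos u := cos_pos_of_mem_Ioo (abs_lt.1 (by linarith))
  have hpos : 0 < sin σ * cos u / cos σ := by positivity
  have hlt : sin σ * cos u / cos σ < 1 := (div_lt_one hcosσ).2 hF
  have hcosv : cos (arccos (sin σ * cos u / cos σ)) = sin σ * cos u / cos σ :=
    cos_arccos (by linarith) hlt.le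
  refine ⟨arccos (sin σ * cos u / cos σ), ?_, arccos_pos.2 hlt, by rw [hcosv]; field_simp⟩
  have hsub : 0 < sin (σ - |u|) := sin_pos_of_pos_of_lt_pi (by linarith)
    (by linarith [abs_nonneg u])
  have hcos_lt : cos (π / 2 - |u|) < cos (arccos (sin σ * cos u / cos σ)) := by
    rw [cos_pi_div_two_sub, hcosv, lt_div_iff₀ hcosσ]
    rw [sin_sub, cos_abs] at hsub
    linarith
  change |u| + |arccos (sin σ * cos u / cos σ)| < π / 2
  rw [abs_of_nonneg (arccos_nonneg _)]
  by_contra! hle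
  exact hcos_lt.not_ge (cos_le_cos_of_nonneg_of_le_pi (by linarith) (arccos_le_pi _) (by linarith))

lemma image_chartXY : chartXY '' (diamond ∩ {p | 0 < p.2}) = collisionRegion := by
  apply Subset.antisymm
  · rintro _ ⟨p, ⟨hp, hv⟩, rfl⟩
    have hu := abs_lt.1 (abs_fst_lt_meanAngle hp)
    have hσ := meanAngle_lt hp
    have hsin := sin_snd_pos hp hv
    have hcos := cos_fst_pos hp
    refine ⟨?_, ?_, ?_, by rw [chartXY, Fm_chartXY hp]; positivity⟩ <;>
      simp only [chartXY, legX, legY] <;> linarith [hu.1, hu.2, abs_nonneg p.2]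
  · rintro ⟨x, y⟩ ⟨hx, hy, hxy, hF⟩
    simp only at hx hy hxy hF
    obtain ⟨σ, hσ⟩ : ∃ σ, σ = (x + y) / 4 := ⟨_, rfl⟩
    obtain ⟨u, hu⟩ : ∃ u, u = (x - y) / 4 := ⟨_, rfl⟩
    obtain rfl : x = 2 * σ + 2 * u := by linarith
    obtain rfl : y = 2 * σ - 2 * u := by linarith
    have hcosσ : 0 < cos σ := cos_pos_of_mem_Ioo ⟨by linarith [pi_pos], by linarith⟩
    have hcos_lt : sin σ * cos u < cos σ := by
      rw [Fm_eq] at hF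
      exact lt_of_pow_lt_pow_left₀ 2 hcosσ.le (by rw [mul_pow]; linarith)
    obtain ⟨v, hp, hv, hroot⟩ := exists_cos_eq (by linarith) (abs_lt.2 ⟨by linarith, by linarith⟩)
      hcos_lt
    refine ⟨(u, v), ⟨hp, hv⟩, ?_⟩
    rw [chartXY, legX, legY,
      meanAngle_eq (cos_fst_pos hp) ⟨by linarith, by linarith⟩ hroot]

section ChangeOfVariables

variable {V E : Type*} [NormedAddCommGroup V] [NormedSpace ℝ V] [FiniteDimensional ℝ V]
  [MeasurableSpace V] [BorelSpace V] {μ : Measure V} [μ.IsAddHaarMeasure]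
  [NormedAddCommGroup E] [NormedSpace ℝ E] {s : Set V} {T : V → V} {T' : V → V →L[ℝ] V}
  {w ρ : V → ℝ}

lemma setIntegral_image_smul (hs : MeasurableSet s) (hT : ∀ p ∈ s, HasFDerivAt T (T' p) p)
    (hinj : InjOn T s) (hw : ∀ p ∈ s, |(T' p).det| * w (T p) = ρ p) (G : V → E) :
    ∫ p in T '' s, w p • G p ∂μ = ∫ p in s, ρ p • G (T p) ∂μ := by
  rw [integral_image_eq_integral_abs_det_fderiv_smul μ hs
    (fun p hp ↦ (hT p hp).hasFDerivWithinAt) hinj]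
  exact setIntegral_congr_fun hs fun p hp ↦ by simp only [smul_smul, hw p hp]

lemma integrableOn_image_smul (hs : MeasurableSet s) (hT : ∀ p ∈ s, HasFDerivAt T (T' p) p)
    (hinj : InjOn T s) (hw : ∀ p ∈ s, |(T' p).det| * w (T p) = ρ p) (G : V → E) :
    IntegrableOn (fun p ↦ w p • G p) (T '' s) μ ↔
      IntegrableOn (fun p ↦ ρ p • G (T p)) s μ := by
  rw [integrableOn_image_iff_integrableOn_abs_det_fderiv_smul μ hs
    (fun p hp ↦ (hT p hp).hasFDerivWithinAt) hinj]
  exact integrableOn_congr_fun (fun p hp ↦ by simp only [smul_smul, hw p hp]) hs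

end ChangeOfVariables

lemma det_prod_smul_fst_add_smul_snd (a b c d : ℝ) :
    ((a • ContinuousLinearMap.fst ℝ ℝ ℝ + b • ContinuousLinearMap.snd ℝ ℝ ℝ).prod
      (c • ContinuousLinearMap.fst ℝ ℝ ℝ + d • ContinuousLinearMap.snd ℝ ℝ ℝ)).det =
      a * d - b * c := by
  rw [← Matrix.toLin_finTwoProd_toContinuousLinearMap, LinearMap.det_toContinuousLinearMap,
    LinearMap.det_toLin, Matrix.det_fin_two_of]

/-- The partial derivative `∂σ/∂u` of `meanAngle`. -/
def meanAngleDerivU (p : ℝ × ℝ) : ℝ := cos p.2 * sin p.1 / (cos p.1 ^ 2 + cos p.2 ^ 2)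

/-- The partial derivative `∂σ/∂v` of `meanAngle`. -/
def meanAngleDerivV (p : ℝ × ℝ) : ℝ := -(sin p.2 * cos p.1 / (cos p.1 ^ 2 + cos p.2 ^ 2))

lemma hasFDerivAt_meanAngle {p : ℝ × ℝ} (hp : p ∈ diamond) :
    HasFDerivAt meanAngle (meanAngleDerivU p • ContinuousLinearMap.fst ℝ ℝ ℝ +
      meanAngleDerivV p • ContinuousLinearMap.snd ℝ ℝ ℝ) p := by
  have hcos := cos_fst_pos hp
  have numerator : HasFDerivAt (fun q : ℝ × ℝ ↦ cos q.2) (-sin p.2 • .snd ℝ ℝ ℝ) p :=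
    (hasDerivAt_cos p.2).comp_hasFDerivAt p hasFDerivAt_snd
  have denominator : HasFDerivAt (fun q : ℝ × ℝ ↦ cos q.1) (-sin p.1 • .fst ℝ ℝ ℝ) p :=
    (hasDerivAt_cos p.1).comp_hasFDerivAt p hasFDerivAt_fst
  refine ((hasDerivAt_arctan (cos p.2 / cos p.1)).comp_hasFDerivAt p (numerator.mul
    ((hasDerivAt_inv hcos.ne').comp_hasFDerivAt p denominator))).congr_fderiv ?_
  ext
  · simp [meanAngleDerivU]
    field_simp
  · simp [meanAngleDerivV]
    field_simp

/-- The derivative of `chartXZ` at `p`. -/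
def chartXZDeriv (p : ℝ × ℝ) : ℝ × ℝ →L[ℝ] ℝ × ℝ :=
  ((2 * meanAngleDerivU p + 2) • ContinuousLinearMap.fst ℝ ℝ ℝ +
    (2 * meanAngleDerivV p) • ContinuousLinearMap.snd ℝ ℝ ℝ).prod
  ((2 * meanAngleDerivU p) • ContinuousLinearMap.fst ℝ ℝ ℝ +
    (2 * meanAngleDerivV p - 2) • ContinuousLinearMap.snd ℝ ℝ ℝ)

/-- The derivative of `chartXY` at `p`. -/
def chartXYDeriv (p : ℝ × ℝ) : ℝ × ℝ →L[ℝ] ℝ × ℝ :=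
  ((2 * meanAngleDerivU p + 2) • ContinuousLinearMap.fst ℝ ℝ ℝ +
    (2 * meanAngleDerivV p) • ContinuousLinearMap.snd ℝ ℝ ℝ).prod
  ((2 * meanAngleDerivU p - 2) • ContinuousLinearMap.fst ℝ ℝ ℝ +
    (2 * meanAngleDerivV p) • ContinuousLinearMap.snd ℝ ℝ ℝ)

lemma hasFDerivAt_chartXZ {p : ℝ × ℝ} (hp : p ∈ diamond) :
    HasFDerivAt chartXZ (chartXZDeriv p) p := by
  have h := (hasFDerivAt_meanAngle hp).const_mul 2
  refine ((h.add (hasFDerivAt_fst.const_mul 2)).prodMk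
    ((h.const_add π).sub (hasFDerivAt_snd.const_mul 2))).congr_fderiv ?_
  ext <;> simp [chartXZDeriv]

lemma hasFDerivAt_chartXY {p : ℝ × ℝ} (hp : p ∈ diamond) :
    HasFDerivAt chartXY (chartXYDeriv p) p := by
  have h := (hasFDerivAt_meanAngle hp).const_mul 2
  refine ((h.add (hasFDerivAt_fst.const_mul 2)).prodMk
    (h.sub (hasFDerivAt_fst.const_mul 2))).congr_fderiv ?_
  ext <;> simp [chartXYDeriv]

lemma sqrt_Fp_chartXZ {p : ℝ × ℝ} (hp : p ∈ diamond) :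
    √(Fp (legX p) (legZ p)) =
      (cos p.1 ^ 2 + cos p.2 ^ 2 + cos p.2 * sin p.1 + sin p.2 * cos p.1) /
        √(cos p.1 ^ 2 + cos p.2 ^ 2) := by
  rw [sqrt_Fp_eq (chartXZ_mem_triangle hp), h0_chartXZ hp,
    show legY p / 2 = meanAngle p - p.1 by rw [legY]; ring,
    show (legX p + legY p - legZ p) / 2 = meanAngle p + p.2 - π / 2 by
      rw [legX, legY, legZ]; ring,
    cos_sub_pi_div_two, cos_sub, sin_add, sin_meanAngle hp, cos_meanAngle hp]
  ring

lemma abs_det_chartXZDeriv_mul {p : ℝ × ℝ} (hp : p ∈ diamond) :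
    |(chartXZDeriv p).det| * (1 / (2 * √(Fp (legX p) (legZ p)))) = diamondWeight p := by
  have hsum := cos_sq_add_cos_sq_pos hp
  have hsqrt := sqrt_pos.2 (Fp_pos_of_mem_triangle (chartXZ_mem_triangle hp))
  have hdet : (chartXZDeriv p).det =
      -(4 * √(Fp (legX p) (legZ p)) / √(cos p.1 ^ 2 + cos p.2 ^ 2)) := by
    rw [sqrt_Fp_chartXZ hp, mul_div_assoc, div_div, mul_self_sqrt hsum.le, chartXZDeriv,
      det_prod_smul_fst_add_smul_snd, meanAngleDerivU, meanAngleDerivV]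
    field_simp
    ring
  rw [hdet, abs_neg, abs_of_pos (by positivity), diamondWeight]
  field_simp
  norm_num

lemma abs_det_chartXYDeriv_mul {p : ℝ × ℝ} (hp : p ∈ diamond ∩ {p | 0 < p.2}) :
    |(chartXYDeriv p).det| * K1 (legX p) (legY p) = 8 * diamondWeight p := by
  obtain ⟨hp, hv⟩ := hp
  have hsum := cos_sq_add_cos_sq_pos hp
  have hcos := cos_fst_pos hp
  have hsin := sin_snd_pos hp hv
  have hdet : (chartXYDeriv p).det = -(8 * (sin p.2 * cos p.1) / (cos p.1 ^ 2 + cos p.2 ^ 2)) := by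
    rw [chartXYDeriv, det_prod_smul_fst_add_smul_snd, meanAngleDerivU, meanAngleDerivV]
    ring
  have hK1 : K1 (legX p) (legY p) =
      4 / (2 * cos p.1 * sin p.2 / √(cos p.1 ^ 2 + cos p.2 ^ 2)) := by
    rw [K1, Fm_chartXY hp, if_pos (by positivity), sqrt_sq (by positivity)]
  rw [hdet, abs_neg, abs_of_pos (by positivity), hK1, diamondWeight]
  nth_rw 1 [← mul_self_sqrt hsum.le]
  field_simp
  norm_num

/-! ### The resonant measure and its symmetries -/

/-- The measure on resonant collisions, in the coordinates `(u, v)`; its total mass is finite. -/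
def diamondMeasure : Measure (ℝ × ℝ) :=
  (volume.restrict diamond).withDensity fun p ↦ ENNReal.ofReal (diamondWeight p)

lemma diamondWeight_nonneg (p : ℝ × ℝ) : 0 ≤ diamondWeight p := by
  unfold diamondWeight
  positivity

lemma measurable_diamondWeight : Measurable diamondWeight :=
  measurable_const.div (by fun_prop : Measurable fun p : ℝ × ℝ ↦ cos p.1 ^ 2 + cos p.2 ^ 2).sqrt

lemma measurable_legX : Measurable legX :=
  (measurable_meanAngle.const_mul 2).add (measurable_fst.const_mul 2)

lemma measurable_legY : Measurable legY :=
  (measurable_meanAngle.const_mul 2).sub (measurable_fst.const_mul 2)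

lemma measurable_legZ : Measurable legZ :=
  ((measurable_meanAngle.const_mul 2).const_add π).sub (measurable_snd.const_mul 2)

lemma measurable_legW : Measurable legW :=
  ((measurable_meanAngle.const_mul 2).const_add π).add (measurable_snd.const_mul 2)

section Integrals

variable {E : Type*} [NormedAddCommGroup E] [NormedSpace ℝ E]

lemma setIntegral_diamondMeasure {s : Set (ℝ × ℝ)} (hs : MeasurableSet s) (φ : ℝ × ℝ → E) :
    ∫ p in s, φ p ∂diamondMeasure = ∫ p in diamond ∩ s, diamondWeight p • φ p := by
  rw [diamondMeasure, setIntegral_withDensity_eq_setIntegral_toReal_smul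
    measurable_diamondWeight.ennreal_ofReal (ae_of_all _ fun _ ↦ ENNReal.ofReal_lt_top) _ hs,
    Measure.restrict_restrict hs, inter_comm]
  simp only [ENNReal.toReal_ofReal (diamondWeight_nonneg _)]

lemma setIntegral_triangle (G : ℝ × ℝ → E) :
    ∫ p in triangle, (1 / (2 * √(Fp p.1 p.2))) • G p = ∫ p, G (chartXZ p) ∂diamondMeasure := by
  rw [← setIntegral_univ (μ := diamondMeasure), setIntegral_diamondMeasure .univ, inter_univ,
    ← image_chartXZ]
  exact setIntegral_image_smul isOpen_diamond.measurableSet (fun _ ↦ hasFDerivAt_chartXZ)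
    leftInvOn_chartXZInv.injOn (fun _ ↦ abs_det_chartXZDeriv_mul) G

lemma measurableSet_snd_pos : MeasurableSet {p : ℝ × ℝ | 0 < p.2} :=
  measurableSet_lt measurable_const measurable_snd

lemma setIntegral_collisionRegion (G : ℝ × ℝ → E) :
    ∫ p in collisionRegion, K1 p.1 p.2 • G p =
      (8 : ℝ) • ∫ p in {p | 0 < p.2}, G (chartXY p) ∂diamondMeasure := by
  rw [setIntegral_diamondMeasure measurableSet_snd_pos, ← integral_smul, ← image_chartXY]
  simp only [smul_smul]
  exact setIntegral_image_smul (isOpen_diamond.measurableSet.inter measurableSet_snd_pos)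
    (fun _ h ↦ hasFDerivAt_chartXY h.1) injOn_chartXY (fun _ ↦ abs_det_chartXYDeriv_mul) G

end Integrals

lemma integrableOn_diamondWeight : IntegrableOn diamondWeight diamond := by
  have on_triangle : IntegrableOn (fun p ↦ (1 / (2 * √(Fp p.1 p.2))) • (1 : ℝ)) triangle := by
    have := integrableOn_one_div_sqrt_Fp.mono_set triangle_subset_II_prod
    simpa only [IntegrableOn, one_div_mul_one_div, smul_eq_mul, mul_one] using
      this.const_mul (1 / 2)
  rw [← image_chartXZ, integrableOn_image_smul isOpen_diamond.measurableSet
    (fun _ ↦ hasFDerivAt_chartXZ) leftInvOn_chartXZInv.injOn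
    (fun _ ↦ abs_det_chartXZDeriv_mul)] at on_triangle
  simpa only [smul_eq_mul, mul_one] using on_triangle

instance isFiniteMeasure_diamondMeasure : IsFiniteMeasure diamondMeasure :=
  isFiniteMeasure_withDensity_ofReal integrableOn_diamondWeight.2

lemma integrableOn_collisionRegion_K1 : IntegrableOn (fun p ↦ K1 p.1 p.2) collisionRegion := by
  have := (integrableOn_image_smul (T' := chartXYDeriv) (w := fun p ↦ K1 p.1 p.2)
    (ρ := fun p ↦ 8 * diamondWeight p) (G := fun _ ↦ (1 : ℝ)) (μ := volume)
    (isOpen_diamond.measurableSet.inter measurableSet_snd_pos)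
    (fun _ h ↦ hasFDerivAt_chartXY h.1) injOn_chartXY (fun _ ↦ abs_det_chartXYDeriv_mul)).2
    (by simpa only [IntegrableOn, smul_eq_mul, mul_one] using
      (integrableOn_diamondWeight.mono_set inter_subset_left).const_mul 8)
  simpa only [image_chartXY, smul_eq_mul, mul_one] using this

section WithDensity

variable {α : Type*} [MeasurableSpace α] {μ ν : Measure α}

lemma measurePreserving_withDensity {e : α ≃ᵐ α} (he : MeasurePreserving e μ ν) {ρ : α → ℝ≥0∞}
    (hρ : ∀ a, ρ (e a) = ρ a) : MeasurePreserving e (μ.withDensity ρ) (ν.withDensity ρ) := by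
  refine ⟨e.measurable, Measure.ext fun t ht ↦ ?_⟩
  rw [Measure.map_apply e.measurable ht, withDensity_apply _ (e.measurable ht),
    withDensity_apply _ ht, ← he.setLIntegral_comp_preimage_emb e.measurableEmbedding]
  simp only [hρ]

end WithDensity

lemma measurePreserving_diamondMeasure {e : ℝ × ℝ ≃ᵐ ℝ × ℝ} (he : MeasurePreserving e)
    (hmem : ∀ p, e p ∈ diamond ↔ p ∈ diamond)
    (hweight : ∀ p, diamondWeight (e p) = diamondWeight p) :
    MeasurePreserving e diamondMeasure diamondMeasure := by
  have on_diamond := he.restrict_preimage isOpen_diamond.measurableSet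
  rw [show e ⁻¹' diamond = diamond from Set.ext hmem] at on_diamond
  exact measurePreserving_withDensity on_diamond fun p ↦ by rw [hweight]

/-- The reflection `u ↦ -u`, which exchanges the incoming legs `legX` and `legY`. -/
def flipU : ℝ × ℝ ≃ᵐ ℝ × ℝ := (MeasurableEquiv.neg ℝ).prodCongr (MeasurableEquiv.refl ℝ)

/-- The reflection `v ↦ -v`, which exchanges the outgoing legs `legZ` and `legW`. -/
def flipV : ℝ × ℝ ≃ᵐ ℝ × ℝ := (MeasurableEquiv.refl ℝ).prodCongr (MeasurableEquiv.neg ℝ)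

lemma flipU_apply (p : ℝ × ℝ) : flipU p = (-p.1, p.2) := rfl

lemma flipV_apply (p : ℝ × ℝ) : flipV p = (p.1, -p.2) := rfl

lemma measurePreserving_flipU : MeasurePreserving flipU diamondMeasure diamondMeasure :=
  measurePreserving_diamondMeasure
    ((Measure.measurePreserving_neg volume).prod (MeasurePreserving.id volume))
    (fun p ↦ by simp [flipU_apply, diamond]) fun p ↦ by simp [flipU_apply, diamondWeight]

lemma measurePreserving_flipV : MeasurePreserving flipV diamondMeasure diamondMeasure :=
  measurePreserving_diamondMeasure
    ((MeasurePreserving.id volume).prod (Measure.measurePreserving_neg volume))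
    (fun p ↦ by simp [flipV_apply, diamond]) fun p ↦ by simp [flipV_apply, diamondWeight]

lemma measurePreserving_swap_diamondMeasure :
    MeasurePreserving MeasurableEquiv.prodComm diamondMeasure diamondMeasure :=
  measurePreserving_diamondMeasure Measure.measurePreserving_swap (fun _ ↦ swap_mem_diamond)
    fun p ↦ by rw [diamondWeight, add_comm]; rfl

/-! ### Symmetries of the square -/

lemma setIntegral_eq_add_setIntegral_comp {α E : Type*} [MeasurableSpace α] {μ : Measure α}
    [NormedAddCommGroup E] [NormedSpace ℝ E] {e : α ≃ᵐ α} (he : MeasurePreserving e μ μ)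
    (hinv : Function.Involutive e) {s t : Set α} (hs : MeasurableSet s)
    (hdisj : Disjoint s (e ⁻¹' s)) (ht : t =ᵐ[μ] (s ∪ e ⁻¹' s : Set α)) {F : α → E}
    (hF : IntegrableOn F t μ) :
    ∫ a in t, F a ∂μ = (∫ a in s, F a ∂μ) + ∫ a in s, F (e a) ∂μ := by
  rw [integrableOn_congr_set_ae ht] at hF
  rw [setIntegral_congr_set ht, setIntegral_union hdisj (e.measurable hs)
    (hF.mono_set subset_union_left) (hF.mono_set subset_union_right),
    ← he.setIntegral_preimage_emb e.measurableEmbedding (fun a ↦ F (e a))]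
  simp only [hinv _]

/-- The reflection `(x, z) ↦ (2π - x, 2π - z)` of the square. -/
def reflect : ℝ × ℝ ≃ᵐ ℝ × ℝ := MeasurableEquiv.subLeft (2 * π, 2 * π)

lemma reflect_apply (p : ℝ × ℝ) : reflect p = (2 * π - p.1, 2 * π - p.2) := rfl

lemma measurePreserving_reflect : MeasurePreserving reflect :=
  Measure.measurePreserving_sub_left volume _

lemma involutive_reflect : Function.Involutive reflect := fun p ↦ sub_sub_cancel _ p

lemma ae_fst_ne_snd : ∀ᵐ p : ℝ × ℝ, p.1 ≠ p.2 := by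
  refine (Measure.ae_prod_iff_ae_ae
    (measurableSet_eq_fun measurable_fst measurable_snd).compl).2 (ae_of_all _ fun x ↦ ?_)
  filter_upwards [Measure.ae_ne volume x] with z hz using hz.symm

lemma II_prod_II_ae_eq_triangle_union_swap :
    (II ×ˢ II : Set (ℝ × ℝ)) =ᵐ[volume] (triangle ∪ Prod.swap ⁻¹' triangle : Set (ℝ × ℝ)) := by
  refine II_prod_II_ae_eq.trans ?_
  filter_upwards [ae_fst_ne_snd] with p hne
  refine propext ⟨fun ⟨hx, hz⟩ ↦ ?_, ?_⟩
  · exact hne.lt_or_gt.imp (⟨hx.1, ·, hz.2⟩) (⟨hz.1, ·, hx.2⟩)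
  · rintro (h | h)
    · exact triangle_subset_Ioo_prod h
    · exact (triangle_subset_Ioo_prod h).symm

lemma disjoint_triangle_swap : Disjoint triangle (Prod.swap ⁻¹' triangle) :=
  disjoint_left.2 fun _ h h' ↦ lt_asymm h.2.1 h'.2.1

lemma reflect_preimage_triangle : reflect ⁻¹' triangle = Prod.swap ⁻¹' triangle := by
  ext p
  simp only [mem_preimage, triangle, mem_ofPred_eq, reflect_apply, Prod.fst_swap, Prod.snd_swap]
  constructor <;> rintro ⟨h1, h2, h3⟩ <;> refine ⟨?_, ?_, ?_⟩ <;> linarith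

lemma collisionRegion_subset : collisionRegion ⊆ Ioo 0 (2 * π) ×ˢ Ioo 0 (2 * π) :=
  fun _ ⟨hx, hy, hxy, _⟩ ↦ ⟨⟨hx, by linarith⟩, ⟨hy, by linarith⟩⟩

lemma measurableSet_collisionRegion : MeasurableSet collisionRegion :=
  (measurableSet_lt measurable_const measurable_fst).inter
    ((measurableSet_lt measurable_const measurable_snd).inter
      ((measurableSet_lt (measurable_fst.add measurable_snd) measurable_const).inter
        (measurableSet_lt measurable_const measurable_Fm)))

lemma disjoint_collisionRegion_reflect : Disjoint collisionRegion (reflect ⁻¹' collisionRegion) :=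
  disjoint_left.2 fun p h h' ↦ by
    have : 2 * π - p.1 + (2 * π - p.2) < 2 * π := h'.2.2.1
    linarith [h.2.2.1]

lemma K1_eq_zero_of_add_eq {x y : ℝ} (h : x + y = 2 * π) : K1 x y = 0 := by
  obtain rfl : y = 2 * π - x := by linarith
  rw [K1, if_neg]
  rw [Fm, sub_div, mul_div_cancel_left₀ π two_ne_zero, cos_pi_sub, sin_pi_sub]
  nlinarith [mul_self_nonneg (sin (x / 2))]

lemma K1_eq_zero_of_notMem {p : ℝ × ℝ} (hp : p ∈ Ioo 0 (2 * π) ×ˢ Ioo 0 (2 * π))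
    (hnot : p ∉ collisionRegion ∪ reflect ⁻¹' collisionRegion) : K1 p.1 p.2 = 0 := by
  obtain ⟨hx, hy⟩ := hp
  by_cases hF : 0 < Fm p.1 p.2
  · rcases lt_trichotomy (p.1 + p.2) (2 * π) with h | h | h
    · exact absurd (.inl ⟨hx.1, hy.1, h, hF⟩) hnot
    · exact K1_eq_zero_of_add_eq h
    · refine absurd (.inr ⟨sub_pos.2 hx.2, sub_pos.2 hy.2, ?_, ?_⟩) hnot
      · change 2 * π - p.1 + (2 * π - p.2) < 2 * π
        linarith
      · rwa [reflect_apply, Fm_two_pi_sub]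
  · exact if_neg hF

lemma collisionRegion_union_subset :
    collisionRegion ∪ reflect ⁻¹' collisionRegion ⊆ Ioo 0 (2 * π) ×ˢ Ioo 0 (2 * π) := by
  refine union_subset collisionRegion_subset fun p hp ↦ ?_
  obtain ⟨hx, hz⟩ := collisionRegion_subset hp
  rw [reflect_apply] at hx hz
  exact ⟨⟨by linarith [hx.2], by linarith [hx.1]⟩, ⟨by linarith [hz.2], by linarith [hz.1]⟩⟩

lemma integrableOn_K1 : IntegrableOn (fun p ↦ K1 p.1 p.2) (II ×ˢ II) := by
  have reflected : IntegrableOn (fun p ↦ K1 p.1 p.2) (reflect ⁻¹' collisionRegion) := by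
    have := (measurePreserving_reflect.integrableOn_comp_preimage
      reflect.measurableEmbedding).2 integrableOn_collisionRegion_K1
    simpa only [Function.comp_def, reflect_apply, K1_two_pi_sub] using this
  rw [integrableOn_congr_set_ae II_prod_II_ae_eq]
  exact (integrableOn_collisionRegion_K1.union reflected).of_forall_sdiff_eq_zero
    (measurableSet_Ioo.prod measurableSet_Ioo) fun p hp ↦ K1_eq_zero_of_notMem hp.1 hp.2

section SquareIntegrals

variable {E : Type*} [NormedAddCommGroup E] [NormedSpace ℝ E] {F : ℝ × ℝ → E}

lemma setIntegral_II_prod_II_swap (hF : IntegrableOn F (II ×ˢ II)) :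
    ∫ p in II ×ˢ II, F p = (∫ p in triangle, F p) + ∫ p in triangle, F p.swap :=
  setIntegral_eq_add_setIntegral_comp (e := MeasurableEquiv.prodComm) Measure.measurePreserving_swap
    Prod.swap_swap isOpen_triangle.measurableSet disjoint_triangle_swap
    II_prod_II_ae_eq_triangle_union_swap hF

lemma setIntegral_II_prod_II_reflect (hF : IntegrableOn F (II ×ˢ II)) :
    ∫ p in II ×ˢ II, F p = (∫ p in triangle, F p) + ∫ p in triangle, F (reflect p) :=
  setIntegral_eq_add_setIntegral_comp measurePreserving_reflect involutive_reflect
    isOpen_triangle.measurableSet (reflect_preimage_triangle ▸ disjoint_triangle_swap)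
    (reflect_preimage_triangle ▸ II_prod_II_ae_eq_triangle_union_swap) hF

lemma setIntegral_II_prod_II_K1 {G : ℝ × ℝ → E}
    (hG : IntegrableOn (fun p ↦ K1 p.1 p.2 • G p) (II ×ˢ II)) :
    ∫ p in II ×ˢ II, K1 p.1 p.2 • G p =
      (∫ p in collisionRegion, K1 p.1 p.2 • G p) +
        ∫ p in collisionRegion, K1 p.1 p.2 • G (reflect p) := by
  rw [integrableOn_congr_set_ae II_prod_II_ae_eq] at hG
  rw [setIntegral_congr_set II_prod_II_ae_eq, setIntegral_eq_of_subset_of_forall_sdiff_eq_zero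
    (measurableSet_Ioo.prod measurableSet_Ioo) collisionRegion_union_subset
    fun p hp ↦ by rw [K1_eq_zero_of_notMem hp.1 hp.2, zero_smul],
    setIntegral_eq_add_setIntegral_comp measurePreserving_reflect involutive_reflect
      measurableSet_collisionRegion disjoint_collisionRegion_reflect (ae_eq_refl _)
      (hG.mono_set collisionRegion_union_subset)]
  simp only [reflect_apply, K1_two_pi_sub]

end SquareIntegrals

/-! ### The kernel identity -/

lemma ae_mem_diamond : ∀ᵐ p ∂diamondMeasure, p ∈ diamond :=
  (withDensity_absolutelyContinuous _ _).ae_le (ae_restrict_mem isOpen_diamond.measurableSet)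

lemma ae_snd_ne_zero : ∀ᵐ p ∂diamondMeasure, p.2 ≠ 0 :=
  (withDensity_absolutelyContinuous _ _).ae_le
    (ae_restrict_of_ae (Measure.quasiMeasurePreserving_snd.ae (Measure.ae_ne volume 0)))

lemma legX_swap {p : ℝ × ℝ} (hp : p ∈ diamond) : legX p.swap = 2 * π - legZ p := by
  rw [legX, legZ, meanAngle_swap hp, Prod.fst_swap]
  ring

lemma legY_swap {p : ℝ × ℝ} (hp : p ∈ diamond) : legY p.swap = 2 * π - legW p := by
  rw [legY, legW, meanAngle_swap hp, Prod.fst_swap]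
  ring

lemma legZ_swap {p : ℝ × ℝ} (hp : p ∈ diamond) : legZ p.swap = 2 * π - legX p := by
  rw [legX, legZ, meanAngle_swap hp, Prod.snd_swap]
  ring

lemma legW_swap {p : ℝ × ℝ} (hp : p ∈ diamond) : legW p.swap = 2 * π - legY p := by
  rw [legY, legW, meanAngle_swap hp, Prod.snd_swap]
  ring

lemma integral_norm_sum_sq {α ι : Type*} [MeasurableSpace α] {μ : Measure α} (s : Finset ι)
    {g : ι → α → ℂ} (hg : ∀ i j, Integrable (fun a ↦ conj (g i a) * g j a) μ) :
    ((∫ a, ‖∑ i ∈ s, g i a‖ ^ 2 ∂μ : ℝ) : ℂ) =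
      ∑ i ∈ s, ∑ j ∈ s, ∫ a, conj (g i a) * g j a ∂μ := by
  rw [← integral_complex_ofReal]
  simp only [Complex.ofReal_pow, ← Complex.conj_mul', map_sum, Finset.sum_mul_sum]
  rw [integral_finsetSum _ fun i _ ↦ integrable_finsetSum _ fun j _ ↦ hg i j]
  exact Finset.sum_congr rfl fun i _ ↦ integral_finsetSum _ fun j _ ↦ hg i j

lemma integrable_smul_conj_comp_mul_comp {α : Type*} [MeasurableSpace α] {μ : Measure α}
    {f : ℝ → ℂ} (hf : Continuous f) (hper : Function.Periodic f (2 * π)) {w : α → ℝ}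
    (hw : Integrable w μ) {a b : α → ℝ} (ha : Measurable a) (hb : Measurable b) :
    Integrable (fun p ↦ w p • (conj (f (a p)) * f (b p))) μ := by
  obtain ⟨B, hB⟩ := isBounded_iff_forall_norm_le.1
    (hper.isBounded_of_continuous two_pi_pos.ne' hf)
  refine hw.smul_bdd (C := B * B) ?_ (ae_of_all _ fun p ↦ ?_)
  · exact ((Complex.continuous_conj.measurable.comp (hf.measurable.comp ha)).mul
      (hf.measurable.comp hb)).aestronglyMeasurable
  · rw [norm_mul, RCLike.norm_conj]
    exact mul_le_mul (hB _ ⟨_, rfl⟩) (hB _ ⟨_, rfl⟩) (norm_nonneg _)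
      ((norm_nonneg _).trans (hB (f 0) ⟨_, rfl⟩))

/-- The correlation `∫ conj(f(a)) f(b)` of two legs `a`, `b` of the resonant collisions. -/
def legCorr (f : ℝ → ℂ) (a b : ℝ × ℝ → ℝ) : ℂ := ∫ p, conj (f (a p)) * f (b p) ∂diamondMeasure

lemma legCorr_comp {f : ℝ → ℂ} {e : ℝ × ℝ ≃ᵐ ℝ × ℝ}
    (he : MeasurePreserving e diamondMeasure diamondMeasure) (a b : ℝ × ℝ → ℝ) :
    legCorr f (a ∘ e) (b ∘ e) = legCorr f a b :=
  he.integral_comp' fun p ↦ conj (f (a p)) * f (b p)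

lemma legX_comp_flipU : legX ∘ flipU = legY := by
  ext p; simp [flipU_apply, legX, legY, meanAngle, sub_eq_add_neg]

lemma legY_comp_flipU : legY ∘ flipU = legX := by
  ext p; simp [flipU_apply, legX, legY, meanAngle]

lemma legZ_comp_flipU : legZ ∘ flipU = legZ := by
  ext p; simp [flipU_apply, legZ, meanAngle]

lemma legX_comp_flipV : legX ∘ flipV = legX := by
  ext p; simp [flipV_apply, legX, meanAngle]

lemma legY_comp_flipV : legY ∘ flipV = legY := by
  ext p; simp [flipV_apply, legY, meanAngle]

lemma legZ_comp_flipV : legZ ∘ flipV = legW := by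
  ext p; simp [flipV_apply, legZ, legW, meanAngle]

lemma legW_comp_flipV : legW ∘ flipV = legZ := by
  ext p; simp [flipV_apply, legZ, legW, meanAngle, sub_eq_add_neg]

section LegCorr

variable (f : ℝ → ℂ)

lemma legCorr_legY_legY : legCorr f legY legY = legCorr f legX legX := by
  rw [← legX_comp_flipU, legCorr_comp measurePreserving_flipU]

lemma legCorr_legY_legX : legCorr f legY legX = legCorr f legX legY := by
  rw [← legCorr_comp measurePreserving_flipU, legX_comp_flipU, legY_comp_flipU]

lemma legCorr_legY_legZ : legCorr f legY legZ = legCorr f legX legZ := by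
  rw [← legCorr_comp measurePreserving_flipU, legY_comp_flipU, legZ_comp_flipU]

lemma legCorr_legZ_legY : legCorr f legZ legY = legCorr f legZ legX := by
  rw [← legCorr_comp measurePreserving_flipU, legY_comp_flipU, legZ_comp_flipU]

lemma legCorr_legX_legW : legCorr f legX legW = legCorr f legX legZ := by
  rw [← legCorr_comp measurePreserving_flipV, legX_comp_flipV, legW_comp_flipV]

lemma legCorr_legW_legX : legCorr f legW legX = legCorr f legZ legX := by
  rw [← legCorr_comp measurePreserving_flipV, legX_comp_flipV, legW_comp_flipV]

lemma legCorr_legY_legW : legCorr f legY legW = legCorr f legX legZ := by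
  rw [← legCorr_comp measurePreserving_flipV, legY_comp_flipV, legW_comp_flipV, legCorr_legY_legZ]

lemma legCorr_legW_legY : legCorr f legW legY = legCorr f legZ legX := by
  rw [← legCorr_comp measurePreserving_flipV, legY_comp_flipV, legW_comp_flipV, legCorr_legZ_legY]

lemma legCorr_legW_legW : legCorr f legW legW = legCorr f legZ legZ := by
  rw [← legCorr_comp measurePreserving_flipV, legW_comp_flipV]

lemma legCorr_legW_legZ : legCorr f legW legZ = legCorr f legZ legW := by
  rw [← legCorr_comp measurePreserving_flipV, legZ_comp_flipV, legW_comp_flipV]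

end LegCorr

/-- The defect `f(x) + f(y) - f(z) - f(x + y - z)` of collision invariance. -/
def collision (f : ℝ → ℂ) (x y z : ℝ) : ℂ := f x + f y - f z - f (x + y - z)

/-- The integrand of `Elim`, with `h0` in place of its periodic extension `hFPU`. -/
def limitDensity (f : ℝ → ℂ) (p : ℝ × ℝ) : ℝ :=
  1 / (2 * √(Fp p.1 p.2)) * ‖collision f p.1 (h0 p.1 p.2) p.2‖ ^ 2

/-- The limiting form in resonant coordinates: the part of `Elim` over `x < z`. -/
def resonantForm (f : ℝ → ℂ) : ℝ :=
  ∫ p, ‖f (legX p) + f (legY p) - f (legZ p) - f (legW p)‖ ^ 2 ∂diamondMeasure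

lemma continuous_collision {f : ℝ → ℂ} (hf : Continuous f) :
    Continuous fun p : ℝ × ℝ × ℝ ↦ collision f p.1 p.2.1 p.2.2 := by
  unfold collision
  fun_prop

lemma Elim_integrand_eq_limitDensity (f : ℝ → ℂ) {p : ℝ × ℝ} (hp : p ∈ II ×ˢ II) :
    1 / (2 * √(Fp p.1 p.2)) *
      ‖f p.1 + f (hFPU p.1 p.2) - f p.2 - f (p.1 - p.2 + hFPU p.1 p.2)‖ ^ 2 = limitDensity f p := by
  rw [hFPU_eq_h0 hp.1 hp.2, sub_add_eq_add_sub]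
  rfl

section PeriodicFunctions

variable {f : ℝ → ℂ}

lemma periodic_comp_neg (hper : Function.Periodic f (2 * π)) :
    Function.Periodic (fun x ↦ f (-x)) (2 * π) := fun x ↦ by
  simp only [neg_add', hper.sub_eq]

lemma collision_two_pi_sub (hper : Function.Periodic f (2 * π)) (x y z : ℝ) :
    collision f (2 * π - x) (2 * π - y) (2 * π - z) = collision (fun x ↦ f (-x)) x y z := by
  rw [collision, show 2 * π - x + (2 * π - y) - (2 * π - z) = 2 * π - (x + y - z) by ring]
  simp only [hper.sub_eq']
  rfl

lemma setIntegral_triangle_limitDensity (hper : Function.Periodic f (2 * π)) :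
    ∫ p in triangle, limitDensity f p = resonantForm f := by
  refine (setIntegral_triangle fun p ↦ ‖collision f p.1 (h0 p.1 p.2) p.2‖ ^ 2).trans
    (integral_congr_ae ?_)
  filter_upwards [ae_mem_diamond] with p hp
  rw [chartXZ, h0_chartXZ hp, collision,
    show legX p + legY p - legZ p = legW p - 2 * π by rw [legX, legY, legZ, legW]; ring,
    hper.sub_eq]

lemma resonantForm_neg (hper : Function.Periodic f (2 * π)) :
    resonantForm (fun x ↦ f (-x)) = resonantForm f := by
  rw [resonantForm, ← measurePreserving_swap_diamondMeasure.integral_comp']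
  refine integral_congr_ae ?_
  filter_upwards [ae_mem_diamond] with p hp
  change ‖f (-legX p.swap) + f (-legY p.swap) - f (-legZ p.swap) - f (-legW p.swap)‖ ^ 2 = _
  rw [legX_swap hp, legY_swap hp, legZ_swap hp, legW_swap hp, ← norm_neg]
  simp only [neg_sub, hper.sub_eq]
  congr 2
  ring

lemma integrableOn_limitDensity (hf : Continuous f) (hper : Function.Periodic f (2 * π)) :
    IntegrableOn (limitDensity f) (II ×ˢ II) := by
  obtain ⟨B, hB⟩ := isBounded_iff_forall_norm_le.1
    (hper.isBounded_of_continuous two_pi_pos.ne' hf)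
  have bound (x : ℝ) : ‖f x‖ ≤ B := hB _ ⟨x, rfl⟩
  have weight : IntegrableOn (fun p ↦ 1 / (2 * √(Fp p.1 p.2))) (II ×ˢ II) := by
    simpa only [IntegrableOn, one_div_mul_one_div] using
      integrableOn_one_div_sqrt_Fp.const_mul (1 / 2)
  refine weight.mul_bdd (c := (B + B + B + B) ^ 2) ?_ (ae_of_all _ fun p ↦ ?_)
  · exact ((continuous_collision hf).measurable.comp (measurable_fst.prodMk
      (measurable_h0.prodMk measurable_snd))).norm.pow_const 2 |>.aestronglyMeasurable
  · rw [norm_pow, norm_norm]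
    gcongr
    exact norm_sub_le_of_le (norm_sub_le_of_le (norm_add_le_of_le (bound _) (bound _)) (bound _))
      (bound _)

lemma Elim_eq_two_mul_resonantForm (hf : Continuous f) (hper : Function.Periodic f (2 * π)) :
    Elim f = 2 * resonantForm f := by
  have square : Elim f = ∫ p in II ×ˢ II, limitDensity f p :=
    setIntegral_congr_fun (measurableSet_Ico.prod measurableSet_Ico)
      fun p hp ↦ Elim_integrand_eq_limitDensity f hp
  have reflected (p : ℝ × ℝ) : limitDensity f (reflect p) = limitDensity (fun x ↦ f (-x)) p := by
    rw [limitDensity, limitDensity, reflect_apply, Fp_two_pi_sub, h0_two_pi_sub, collision,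
      show 2 * π - p.1 + -h0 p.1 p.2 - (2 * π - p.2) = -(p.1 + h0 p.1 p.2 - p.2) by ring,
      hper.sub_eq', hper.sub_eq']
    rfl
  rw [square, setIntegral_II_prod_II_reflect (integrableOn_limitDensity hf hper)]
  simp only [reflected]
  rw [setIntegral_triangle_limitDensity hper, setIntegral_triangle_limitDensity
    (periodic_comp_neg hper), resonantForm_neg hper, two_mul]

lemma legCorr_neg (hper : Function.Periodic f (2 * π)) :
    legCorr (fun x ↦ f (-x)) legX legY = legCorr f legZ legW := by
  rw [legCorr, ← measurePreserving_swap_diamondMeasure.integral_comp']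
  refine integral_congr_ae ?_
  filter_upwards [ae_mem_diamond] with p hp
  change conj (f (-legX p.swap)) * f (-legY p.swap) = _
  simp only [legX_swap hp, legY_swap hp, neg_sub, hper.sub_eq]

lemma setIntegral_collisionRegion_K1 (hf : Continuous f) (hper : Function.Periodic f (2 * π)) :
    ∫ p in collisionRegion, K1 p.1 p.2 • (conj (f p.1) * f p.2) = 4 * legCorr f legX legY := by
  have flipV_even (p : ℝ × ℝ) : conj (f (legX (flipV p))) * f (legY (flipV p)) =
      conj (f (legX p)) * f (legY p) := by
    rw [← Function.comp_apply (f := legX), ← Function.comp_apply (f := legY), legX_comp_flipV,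
      legY_comp_flipV]
  have cover : (univ : Set (ℝ × ℝ)) =ᵐ[diamondMeasure]
      ({p | 0 < p.2} ∪ flipV ⁻¹' {p | 0 < p.2} : Set (ℝ × ℝ)) := by
    filter_upwards [ae_snd_ne_zero] with p hne
    exact propext ⟨fun _ ↦ hne.lt_or_gt.symm.imp id neg_pos.2, fun _ ↦ trivial⟩
  have halves := setIntegral_eq_add_setIntegral_comp measurePreserving_flipV
    (fun p ↦ by simp [flipV_apply]) measurableSet_snd_pos (disjoint_left.2 fun p h h' ↦ by
      simp only [mem_preimage, flipV_apply, mem_ofPred_eq] at h h'; linarith) cover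
    (F := fun p ↦ conj (f (legX p)) * f (legY p)) (by
      simpa using integrable_smul_conj_comp_mul_comp hf hper (integrable_const (1 : ℝ))
        measurable_legX measurable_legY)
  simp only [flipV_even, setIntegral_univ] at halves
  rw [setIntegral_collisionRegion fun p ↦ conj (f p.1) * f p.2, legCorr, halves, Complex.real_smul]
  push_cast
  simp only [chartXY]
  ring

lemma setIntegral_K1 (hf : Continuous f) (hper : Function.Periodic f (2 * π)) :
    ∫ p in II ×ˢ II, K1 p.1 p.2 • (conj (f p.1) * f p.2) =
      4 * legCorr f legX legY + 4 * legCorr f legZ legW := by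
  rw [setIntegral_II_prod_II_K1 (integrable_smul_conj_comp_mul_comp hf hper integrableOn_K1
    measurable_fst measurable_snd), setIntegral_collisionRegion_K1 hf hper, ← legCorr_neg hper,
    ← setIntegral_collisionRegion_K1 (by fun_prop) (periodic_comp_neg hper)]
  simp only [reflect_apply, hper.sub_eq']

lemma setIntegral_triangle_K2 (G : ℝ × ℝ → ℂ) :
    ∫ p in triangle, K2 p.1 p.2 • G p = 4 * ∫ p, G (chartXZ p) ∂diamondMeasure := by
  rw [← setIntegral_triangle, ← integral_const_mul]
  congr 1 with p
  rw [Complex.real_smul, Complex.real_smul, K2]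
  push_cast
  ring

lemma setIntegral_K2_diag (hf : Continuous f) (hper : Function.Periodic f (2 * π)) :
    ∫ p in II ×ˢ II, K2 p.1 p.2 • (conj (f p.1) * f p.1) =
      4 * legCorr f legX legX + 4 * legCorr f legZ legZ := by
  rw [setIntegral_II_prod_II_swap (integrable_smul_conj_comp_mul_comp hf hper integrableOn_K2
    measurable_fst measurable_fst), setIntegral_triangle_K2]
  simp only [Prod.fst_swap, Prod.snd_swap, K2_comm (Prod.snd _)]
  rw [setIntegral_triangle_K2 fun p ↦ conj (f p.2) * f p.2]
  rfl

lemma setIntegral_K2 (hf : Continuous f) (hper : Function.Periodic f (2 * π)) :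
    ∫ p in II ×ˢ II, K2 p.1 p.2 • (conj (f p.1) * f p.2) =
      4 * legCorr f legX legZ + 4 * legCorr f legZ legX := by
  rw [setIntegral_II_prod_II_swap (integrable_smul_conj_comp_mul_comp hf hper integrableOn_K2
    measurable_fst measurable_snd), setIntegral_triangle_K2]
  simp only [Prod.fst_swap, Prod.snd_swap, K2_comm (Prod.snd _)]
  rw [setIntegral_triangle_K2 fun p ↦ conj (f p.2) * f p.1]
  rfl

lemma integral_VV_mul (hf : Continuous f) (hper : Function.Periodic f (2 * π)) :
    ((∫ x in II, VV x * ‖f x‖ ^ 2 : ℝ) : ℂ) =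
      ∫ p in II ×ˢ II, K2 p.1 p.2 • (conj (f p.1) * f p.1) := by
  have hI := integrable_smul_conj_comp_mul_comp hf hper integrableOn_K2 measurable_fst
    measurable_fst
  rw [Measure.volume_eq_prod] at hI ⊢
  rw [setIntegral_prod _ hI, ← integral_complex_ofReal]
  congr 1 with x
  dsimp only
  rw [integral_smul_const, Complex.conj_mul', Complex.real_smul, Complex.ofReal_mul,
    Complex.ofReal_pow, VV]

lemma resonantForm_eq (hf : Continuous f) (hper : Function.Periodic f (2 * π)) :
    (resonantForm f : ℂ) = 2 * legCorr f legX legX + 2 * legCorr f legZ legZ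
      - 4 * legCorr f legX legZ - 4 * legCorr f legZ legX
      + 2 * legCorr f legX legY + 2 * legCorr f legZ legW := by
  let leg : Fin 4 → ℝ × ℝ → ℝ := ![legX, legY, legZ, legW]
  let sign : Fin 4 → ℂ := ![1, 1, -1, -1]
  have measurable_leg (i : Fin 4) : Measurable (leg i) := by
    fin_cases i
    exacts [measurable_legX, measurable_legY, measurable_legZ, measurable_legW]
  have conj_mul_eq (i j : Fin 4) (p : ℝ × ℝ) :
      conj (sign i * f (leg i p)) * (sign j * f (leg j p)) =
        conj (sign i) * sign j * ((1 : ℝ) • (conj (f (leg i p)) * f (leg j p))) := by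
    rw [map_mul, one_smul, mul_mul_mul_comm]
  have expand := integral_norm_sum_sq (μ := diamondMeasure) Finset.univ
    (g := fun i p ↦ sign i * f (leg i p)) fun i j ↦ by
      simp only [conj_mul_eq]
      exact (integrable_smul_conj_comp_mul_comp hf hper (integrable_const 1) (measurable_leg i)
        (measurable_leg j)).const_mul _
  have corr (i j : Fin 4) : ∫ p, conj (sign i * f (leg i p)) * (sign j * f (leg j p))
      ∂diamondMeasure = conj (sign i) * sign j * legCorr f (leg i) (leg j) := by
    simp only [conj_mul_eq, one_smul, integral_const_mul, legCorr]
  have defect (p : ℝ × ℝ) : ∑ i, sign i * f (leg i p) =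
      f (legX p) + f (legY p) - f (legZ p) - f (legW p) := by
    simp [Fin.sum_univ_four, leg, sign, sub_eq_add_neg]
  simp only [corr, defect] at expand
  rw [resonantForm, expand]
  simp only [Fin.sum_univ_four, leg, sign, Matrix.cons_val, map_one, map_neg]
  rw [legCorr_legY_legY, legCorr_legW_legW, legCorr_legY_legX, legCorr_legW_legZ,
    legCorr_legY_legZ, legCorr_legZ_legY, legCorr_legY_legW, legCorr_legW_legY,
    legCorr_legX_legW, legCorr_legW_legX]
  ring

theorem Elim_eq_kernel_form (hf : Continuous f) (hper : Function.Periodic f (2 * π)) :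
    (Elim f : ℂ) = ((∫ x in II, VV x * ‖f x‖ ^ 2 : ℝ) : ℂ) +
      ∫ p in II ×ˢ II, conj (f p.1) * ((K1 p.1 p.2 - 2 * K2 p.1 p.2 : ℝ) : ℂ) * f p.2 := by
  have split : ∫ p in II ×ˢ II, conj (f p.1) * ((K1 p.1 p.2 - 2 * K2 p.1 p.2 : ℝ) : ℂ) * f p.2 =
      (∫ p in II ×ˢ II, K1 p.1 p.2 • (conj (f p.1) * f p.2)) -
        2 * ∫ p in II ×ˢ II, K2 p.1 p.2 • (conj (f p.1) * f p.2) := by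
    rw [← integral_const_mul, ← integral_sub
      (integrable_smul_conj_comp_mul_comp hf hper integrableOn_K1 measurable_fst measurable_snd)
      ((integrable_smul_conj_comp_mul_comp hf hper integrableOn_K2 measurable_fst
        measurable_snd).const_mul 2)]
    congr 1 with p
    simp only [Complex.real_smul]
    push_cast
    ring
  rw [split, integral_VV_mul hf hper, setIntegral_K2_diag hf hper, setIntegral_K1 hf hper,
    setIntegral_K2 hf hper, Elim_eq_two_mul_resonantForm hf hper, Complex.ofReal_mul,
    resonantForm_eq hf hper]
  push_cast
  ring

end PeriodicFunctions

/-! ### The regularized delta function -/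

lemma deltaE_nonneg {ε : ℝ} (hε : 0 ≤ ε) (X : ℝ) : 0 ≤ deltaE ε X := by
  unfold deltaE; positivity

lemma deltaE_le_deltaE_of_le_abs {ε m X : ℝ} (hε : 0 ≤ ε) (hm : 0 < m) (hX : m ≤ |X|) :
    deltaE ε X ≤ deltaE ε m := by
  unfold deltaE
  rw [← sq_abs X]
  gcongr

lemma deltaE_mul_abs_le_one {ε : ℝ} (hε : 0 < ε) (X : ℝ) : deltaE ε X * |X| ≤ 1 := by
  rw [deltaE, div_mul_eq_mul_div, div_le_one (by positivity)]
  calc ε / π * |X| ≤ ε * |X| := by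
        gcongr
        exact div_le_self hε.le (one_le_two.trans two_le_pi)
    _ ≤ ε ^ 2 + X ^ 2 := by nlinarith [sq_nonneg (ε - |X|), sq_abs X]

lemma continuous_deltaE {ε : ℝ} (hε : ε ≠ 0) : Continuous (deltaE ε) :=
  continuous_const.div (by fun_prop) fun X ↦ by positivity

lemma tendsto_deltaE {X : ℝ} (hX : X ≠ 0) : Tendsto (fun ε ↦ deltaE ε X) (𝓝[>] 0) (𝓝 0) := by
  have hcont : ContinuousAt (fun ε ↦ deltaE ε X) 0 :=
    ContinuousAt.div (by fun_prop) (by fun_prop) (by positivity)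
  have hlim := hcont.tendsto.mono_left (nhdsWithin_le_nhds (s := Ioi 0))
  simpa only [deltaE, zero_div] using hlim

section LevelSet

variable {φ φ' : ℝ → ℝ} {a b c : ℝ}

lemma integral_deltaE_comp_mul_deriv (hφ : ∀ y ∈ uIcc a b, HasDerivAt φ (φ' y) y)
    (hφ' : ContinuousOn φ' (uIcc a b)) {ε : ℝ} (hε : ε ≠ 0) :
    ∫ y in a..b, deltaE ε (φ y) * φ' y = (arctan (φ b / ε) - arctan (φ a / ε)) / π := by
  have hcont : ContinuousOn φ (uIcc a b) := fun y hy ↦ (hφ y hy).continuousAt.continuousWithinAt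
  have hint : IntervalIntegrable (fun y ↦ deltaE ε (φ y) * φ' y) volume a b :=
    (((continuous_deltaE hε).comp_continuousOn hcont).mul hφ').intervalIntegrable
  rw [intervalIntegral.integral_eq_sub_of_hasDerivAt (f := fun y ↦ arctan (φ y / ε) / π)
    (fun y hy ↦ ?_) hint, sub_div]
  refine ((((hφ y hy).div_const ε).arctan).div_const π).congr_deriv ?_
  rw [deltaE]
  field_simp

lemma tendsto_integral_deltaE_comp_mul_deriv (hφ : ∀ y ∈ uIcc a b, HasDerivAt φ (φ' y) y)
    (hφ' : ContinuousOn φ' (uIcc a b)) (ha : φ a < 0) (hb : 0 < φ b) :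
    Tendsto (fun ε ↦ ∫ y in a..b, deltaE ε (φ y) * φ' y) (𝓝[>] 0) (𝓝 1) := by
  have hinv : Tendsto (fun ε : ℝ ↦ ε⁻¹) (𝓝[>] 0) atTop := tendsto_inv_nhdsGT_zero
  have right : Tendsto (fun ε ↦ arctan (φ b / ε)) (𝓝[>] 0) (𝓝 (π / 2)) :=
    (tendsto_arctan_atTop.mono_right nhdsWithin_le_nhds).comp (hinv.const_mul_atTop hb)
  have left : Tendsto (fun ε ↦ arctan (φ a / ε)) (𝓝[>] 0) (𝓝 (-(π / 2))) :=
    (tendsto_arctan_atBot.mono_right nhdsWithin_le_nhds).comp (hinv.const_mul_atTop_of_neg ha)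
  have total : (π / 2 - -(π / 2)) / π = 1 := by field_simp; ring
  refine (total ▸ (right.sub left).div_const π).congr' ?_
  filter_upwards [self_mem_nhdsWithin] with ε (hε : 0 < ε)
  exact (integral_deltaE_comp_mul_deriv hφ hφ' hε.ne').symm

lemma integral_deltaE_comp_mul_le (hab : a ≤ b) (hφ : ∀ y ∈ Icc a b, HasDerivAt φ (φ' y) y)
    (hφ' : ContinuousOn φ' (Icc a b)) {m M : ℝ} (hm : 0 < m) (hm_le : ∀ y ∈ Icc a b, m ≤ φ' y)
    {g : ℝ → ℝ} (hg : ContinuousOn g (Icc a b)) (hgM : ∀ y ∈ Icc a b, g y ≤ M) (hM : 0 ≤ M)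
    {ε : ℝ} (hε : 0 < ε) :
    ∫ y in a..b, deltaE ε (φ y) * g y ≤ M / m := by
  have hδ : ContinuousOn (fun y ↦ deltaE ε (φ y)) (Icc a b) :=
    (continuous_deltaE hε.ne').comp_continuousOn
      fun y hy ↦ (hφ y hy).continuousAt.continuousWithinAt
  have pointwise (y : ℝ) (hy : y ∈ Icc a b) :
      deltaE ε (φ y) * g y ≤ M / m * (deltaE ε (φ y) * φ' y) := by
    calc deltaE ε (φ y) * g y ≤ deltaE ε (φ y) * (M / m * φ' y) := by
          refine mul_le_mul_of_nonneg_left ?_ (deltaE_nonneg hε.le _)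
          rw [div_mul_eq_mul_div, le_div_iff₀ hm]
          exact mul_le_mul (hgM y hy) (hm_le y hy) hm.le hM
      _ = _ := mul_left_comm _ _ _
  rw [← uIcc_of_le hab] at hg hφ hφ' hδ
  have mass : (arctan (φ b / ε) - arctan (φ a / ε)) / π ≤ 1 := by
    rw [div_le_one pi_pos]
    linarith [arctan_lt_pi_div_two (φ b / ε), neg_pi_div_two_lt_arctan (φ a / ε)]
  calc ∫ y in a..b, deltaE ε (φ y) * g y
      ≤ ∫ y in a..b, M / m * (deltaE ε (φ y) * φ' y) :=
        intervalIntegral.integral_mono_on hab (hδ.mul hg).intervalIntegrable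
          ((hδ.mul hφ').const_mul _).intervalIntegrable pointwise
    _ ≤ M / m * 1 := by
        rw [intervalIntegral.integral_const_mul, integral_deltaE_comp_mul_deriv hφ hφ' hε.ne']
        gcongr
    _ = M / m := mul_one _

lemma tendstoUniformlyOn_deltaE_comp_mul {K : Set ℝ} (hK : IsCompact K) (hφ : ContinuousOn φ K)
    (hne : ∀ y ∈ K, φ y ≠ 0) {g : ℝ → ℝ} (hg : ContinuousOn g K) :
    TendstoUniformlyOn (fun ε y ↦ deltaE ε (φ y) * g y) 0 (𝓝[>] 0) K := by
  obtain ⟨m, hm, hm_le⟩ := hK.exists_forall_le' hφ.abs fun y hy ↦ abs_pos.2 (hne y hy)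
  obtain ⟨M, hM⟩ := hK.exists_bound_of_continuousOn hg
  have lim : Tendsto (fun ε ↦ deltaE ε m * |M|) (𝓝[>] 0) (𝓝 0) := by
    simpa only [zero_mul] using (tendsto_deltaE hm.ne').mul_const |M|
  refine Metric.tendstoUniformlyOn_iff.2 fun η hη ↦ ?_
  filter_upwards [lim.eventually_lt_const hη, self_mem_nhdsWithin] with ε hsmall (hε : 0 < ε) y hy
  rw [Pi.zero_apply, dist_zero_left, norm_mul, norm_of_nonneg (deltaE_nonneg hε.le _)]
  refine lt_of_le_of_lt ?_ hsmall
  exact mul_le_mul (deltaE_le_deltaE_of_le_abs hε.le hm (hm_le y hy))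
    ((hM y hy).trans (le_abs_self M)) (norm_nonneg _) (deltaE_nonneg hε.le _)

theorem tendsto_integral_deltaE_comp_smul {E : Type*} [NormedAddCommGroup E] [NormedSpace ℝ E]
    [CompleteSpace E] (hφ : ∀ y ∈ Icc a b, HasDerivAt φ (φ' y) y)
    (hφ' : ContinuousOn φ' (Icc a b)) (hpos : ∀ y ∈ Icc a b, 0 < φ' y) (hc : c ∈ Ioo a b)
    (hzero : φ c = 0) {g : ℝ → E} (hg : ContinuousOn g (Icc a b)) :
    Tendsto (fun ε ↦ ∫ y in a..b, deltaE ε (φ y) • g y) (𝓝[>] 0) (𝓝 ((φ' c)⁻¹ • g c)) := by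
  have hab : a ≤ b := (hc.1.trans hc.2).le
  have hc' : c ∈ Icc a b := Ioo_subset_Icc_self hc
  have hcont : ContinuousOn φ (Icc a b) := fun y hy ↦ (hφ y hy).continuousAt.continuousWithinAt
  have hmono : StrictMonoOn φ (Icc a b) :=
    strictMonoOn_of_deriv_pos (convex_Icc a b) hcont fun y hy ↦ by
      rw [(hφ y (interior_subset hy)).deriv]
      exact hpos y (interior_subset hy)
  have quotient : ContinuousOn (fun y ↦ (φ' y)⁻¹ • g y) (Icc a b) :=
    (hφ'.inv₀ fun y hy ↦ (hpos y hy).ne').smul hg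
  have mass : Tendsto (fun ε ↦ ∫ y in Icc a b, deltaE ε (φ y) * φ' y) (𝓝[>] 0) (𝓝 1) := by
    simp only [integral_Icc_eq_integral_Ioc, ← intervalIntegral.integral_of_le hab]
    rw [← uIcc_of_le hab] at hφ hφ'
    exact tendsto_integral_deltaE_comp_mul_deriv hφ hφ'
      (hzero ▸ hmono (left_mem_Icc.2 hab) hc' hc.1) (hzero ▸ hmono hc' (right_mem_Icc.2 hab) hc.2)
  refine (tendsto_setIntegral_peak_smul_of_integrableOn_of_tendsto measurableSet_Icc
    measurableSet_Icc Subset.rfl self_mem_nhdsWithin measure_Icc_lt_top.ne ?_ (fun u hu hcu ↦ ?_)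
    mass ?_ quotient.integrableOn_Icc (quotient c hc')).congr fun ε ↦ ?_
  · filter_upwards [self_mem_nhdsWithin] with ε (hε : 0 < ε) y hy
    exact mul_nonneg (deltaE_nonneg hε.le _) (hpos y hy).le
  · refine tendstoUniformlyOn_deltaE_comp_mul (isCompact_Icc.diff hu)
      (hcont.mono sdiff_subset) (fun y hy h ↦ hy.2 ?_) (hφ'.mono sdiff_subset)
    rwa [hmono.injOn hy.1 hc' (h.trans hzero.symm)]
  · filter_upwards [self_mem_nhdsWithin] with ε (hε : 0 < ε)
    exact (((continuous_deltaE hε.ne').comp_continuousOn hcont).mul hφ').aestronglyMeasurable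
      measurableSet_Icc
  · rw [intervalIntegral.integral_of_le hab, ← integral_Icc_eq_integral_Ioc]
    refine setIntegral_congr_fun measurableSet_Icc fun y hy ↦ ?_
    simp only [smul_smul, mul_assoc, mul_inv_cancel₀ (hpos y hy).ne', mul_one]

end LevelSet

/-! ### Localization of the energy shell -/

lemma Omg_eq_phase {x y z : ℝ} (h : (x, z) ∈ triangle) (hy : y ∈ Icc 0 (z - x)) :
    Omg x y z = phase x z y := by
  obtain ⟨hx, hxz, hz⟩ : 0 < x ∧ x < z ∧ z < 2 * π := h
  have fourth : omg (x + y - z) = -sin ((x + y - z) / 2) := by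
    rw [← omg_neg, omg_eq_sin_half ⟨by linarith [hy.2], by linarith [hy.1]⟩, neg_div, sin_neg]
  rw [Omg, fourth, omg_eq_sin_half ⟨hx.le, by linarith⟩,
    omg_eq_sin_half ⟨hy.1, by linarith [hy.2]⟩, omg_eq_sin_half ⟨by linarith, hz.le⟩, phase,
    sub_neg_eq_add]

lemma cos_sq_le_deriv_phase {x y z : ℝ} (h : (x, z) ∈ triangle) (hy : y ∈ Icc 0 (z - x)) :
    cos ((z - x) / 4) ^ 2 ≤ (cos (y / 2) + cos ((x + y - z) / 2)) / 2 := by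
  have hcos := cos_quarter_sub_pos h
  obtain ⟨hx, hxz, hz⟩ : 0 < x ∧ x < z ∧ z < 2 * π := h
  have le_cos : cos ((z - x) / 4) ≤ cos (y / 2 - (z - x) / 4) := by
    rw [← cos_abs (y / 2 - (z - x) / 4)]
    refine cos_le_cos_of_nonneg_of_le_pi (abs_nonneg _) (by linarith) ?_
    rw [abs_le]
    constructor <;> linarith [hy.1, hy.2]
  have product : cos (y / 2) + cos ((x + y - z) / 2) =
      2 * (cos (y / 2 - (z - x) / 4) * cos ((z - x) / 4)) := by
    rw [← mul_assoc, two_mul_cos_mul_cos, add_comm]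
    congr 2 <;> ring
  rw [product, mul_div_cancel_left₀ _ two_ne_zero, sq]
  gcongr

lemma two_pi_sub_le_cos {x z : ℝ} (h : (x, z) ∈ triangle) :
    2 * π - (z - x) ≤ 2 * π * cos ((z - x) / 4) := by
  obtain ⟨hx, hxz, hz⟩ : 0 < x ∧ x < z ∧ z < 2 * π := h
  have jordan := mul_le_sin (x := π / 2 - (z - x) / 4) (by linarith) (by linarith)
  rw [sin_pi_div_two_sub] at jordan
  calc 2 * π - (z - x) = 2 * π * (2 / π * (π / 2 - (z - x) / 4)) := by field_simp; ring
    _ ≤ 2 * π * cos ((z - x) / 4) := by gcongr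

section Collision

variable {f : ℝ → ℂ} {K : NNReal}

lemma norm_collision_le_abs_sub_left (hlip : LipschitzWith K f) (x y z : ℝ) :
    ‖collision f x y z‖ ≤ 2 * K * |x - z| := by
  have h₁ := hlip.norm_sub_le x z
  have h₂ := hlip.norm_sub_le (x + y - z) y
  rw [norm_eq_abs] at h₁ h₂
  rw [add_sub_right_comm, add_sub_cancel_right] at h₂
  calc ‖collision f x y z‖ = ‖(f x - f z) - (f (x - z + y) - f y)‖ := by
        rw [collision, add_sub_right_comm]; ring_nf
    _ ≤ ‖f x - f z‖ + ‖f (x - z + y) - f y‖ := norm_sub_le _ _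
    _ ≤ 2 * K * |x - z| := by linarith

lemma collision_comm (f : ℝ → ℂ) (x y z : ℝ) : collision f x y z = collision f y x z := by
  rw [collision, add_comm x y, add_comm (f x), collision]

lemma norm_collision_sq_le (hlip : LipschitzWith K f) (x y z : ℝ) :
    ‖collision f x y z‖ ^ 2 ≤ 4 * K ^ 2 * (|x - z| * |y - z|) := by
  calc ‖collision f x y z‖ ^ 2 = ‖collision f x y z‖ * ‖collision f y x z‖ := by
        rw [sq, collision_comm f y]
    _ ≤ (2 * K * |x - z|) * (2 * K * |y - z|) := by
        gcongr
        · exact norm_collision_le_abs_sub_left hlip x y z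
        · exact norm_collision_le_abs_sub_left hlip y x z
    _ = _ := by ring

lemma norm_collision_le_two_pi_sub (hper : Function.Periodic f (2 * π))
    (hlip : LipschitzWith K f) {x z : ℝ} (h : (x, z) ∈ triangle) (y : ℝ) :
    ‖collision f x y z‖ ≤ 2 * K * (2 * π - (z - x)) := by
  have shift : collision f x y z = collision f (x + 2 * π) y z := by
    rw [collision, collision, hper x, show x + 2 * π + y - z = x + y - z + 2 * π by ring, hper]
  have hpos : 0 ≤ x + 2 * π - z := by linarith [h.1, h.2.2]
  calc ‖collision f x y z‖ ≤ 2 * K * |x + 2 * π - z| :=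
        shift ▸ norm_collision_le_abs_sub_left hlip _ y z
    _ = 2 * K * (2 * π - (z - x)) := by rw [abs_of_nonneg hpos]; ring

end Collision

/-- The regularized integrand `δ_ε(Ω) |f(x) + f(y) - f(z) - f(x + y - z)|²`. -/
def shellDensity (f : ℝ → ℂ) (ε : ℝ) (p : ℝ × ℝ × ℝ) : ℝ :=
  deltaE ε (Omg p.1 p.2.1 p.2.2) * ‖collision f p.1 p.2.1 p.2.2‖ ^ 2

lemma continuous_shellDensity {f : ℝ → ℂ} (hf : Continuous f) {ε : ℝ} (hε : ε ≠ 0) :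
    Continuous (shellDensity f ε) :=
  ((continuous_deltaE hε).comp continuous_Omg).mul ((continuous_collision hf).norm.pow 2)

lemma shellDensity_nonneg (f : ℝ → ℂ) {ε : ℝ} (hε : 0 ≤ ε) (p : ℝ × ℝ × ℝ) :
    0 ≤ shellDensity f ε p :=
  mul_nonneg (deltaE_nonneg hε _) (sq_nonneg _)

section Fiber

variable {f : ℝ → ℂ} {K : NNReal} {x z : ℝ}

lemma integral_shellDensity_eq_phase (f : ℝ → ℂ) (ε : ℝ) (h : (x, z) ∈ triangle) :
    ∫ y in 0..z - x, shellDensity f ε (x, y, z) =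
      ∫ y in 0..z - x, deltaE ε (phase x z y) * ‖collision f x y z‖ ^ 2 := by
  refine intervalIntegral.integral_congr fun y hy ↦ ?_
  rw [uIcc_of_le (sub_nonneg.2 h.2.1.le)] at hy
  simp only [shellDensity, Omg_eq_phase h hy]

lemma continuous_norm_collision_sq (hf : Continuous f) (x z : ℝ) :
    Continuous fun y ↦ ‖collision f x y z‖ ^ 2 := by
  unfold collision; fun_prop

/-- The bound is uniform because, as `z - x → 2π`, the collision term vanishes by periodicity
as fast as the derivative of the phase. -/
lemma norm_integral_shellDensity_le (hper : Function.Periodic f (2 * π))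
    (hlip : LipschitzWith K f) (h : (x, z) ∈ triangle) {ε : ℝ} (hε : 0 < ε) :
    ‖∫ y in 0..z - x, shellDensity f ε (x, y, z)‖ ≤ 16 * π ^ 2 * K ^ 2 := by
  have hle : 0 ≤ z - x := sub_nonneg.2 h.2.1.le
  have hcos := cos_quarter_sub_pos h
  have bound (y : ℝ) : ‖collision f x y z‖ ^ 2 ≤
      16 * π ^ 2 * K ^ 2 * cos ((z - x) / 4) ^ 2 :=
    calc ‖collision f x y z‖ ^ 2 ≤ (2 * K * (2 * π * cos ((z - x) / 4))) ^ 2 := by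
          gcongr
          exact (norm_collision_le_two_pi_sub hper hlip h y).trans
            (mul_le_mul_of_nonneg_left (two_pi_sub_le_cos h) (by positivity))
      _ = _ := by ring
  rw [norm_of_nonneg (intervalIntegral.integral_nonneg hle fun y _ ↦
    shellDensity_nonneg f hε.le _), integral_shellDensity_eq_phase f ε h]
  refine (integral_deltaE_comp_mul_le hle (fun y _ ↦ hasDerivAt_phase x z y) (by fun_prop)
    (by positivity) (fun y hy ↦ cos_sq_le_deriv_phase h hy)
    (continuous_norm_collision_sq hlip.continuous x z).continuousOn (fun y _ ↦ bound y)
    (by positivity) hε).trans_eq ?_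
  rw [mul_div_cancel_right₀ _ (by positivity)]

lemma tendsto_integral_shellDensity (hf : Continuous f) (h : (x, z) ∈ triangle) :
    Tendsto (fun ε ↦ ∫ y in 0..z - x, shellDensity f ε (x, y, z)) (𝓝[>] 0)
      (𝓝 (4 * limitDensity f (x, z))) := by
  have hcos := cos_quarter_sub_pos h
  have lim := tendsto_integral_deltaE_comp_smul (fun y _ ↦ hasDerivAt_phase x z y)
    (by fun_prop) (fun y hy ↦ (pow_pos hcos 2).trans_le (cos_sq_le_deriv_phase h hy))
    (h0_mem_Ioo h) (phase_h0 h) (continuous_norm_collision_sq hf x z).continuousOn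
  have weight : ((cos (h0 x z / 2) + cos ((x + h0 x z - z) / 2)) / 2)⁻¹ •
      ‖collision f x (h0 x z) z‖ ^ 2 = 4 * limitDensity f (x, z) := by
    rw [← sqrt_Fp_eq h, limitDensity, smul_eq_mul, inv_div, one_div, mul_inv]
    ring
  rw [weight] at lim
  exact lim.congr fun ε ↦ (integral_shellDensity_eq_phase f ε h).symm

end Fiber

/-! ### Decomposition of the cube -/

section FiberedSet

variable {α β E : Type*} [MeasurableSpace α] [MeasurableSpace β] {μ : Measure α} {ν : Measure β}
  [NormedAddCommGroup E] [NormedSpace ℝ E] {A : Set α} {B : α → Set β} {F : α × β → E}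

lemma integral_indicator_fibered (hs : MeasurableSet {p : α × β | p.1 ∈ A ∧ p.2 ∈ B p.1}) (a : α) :
    ∫ b, {p : α × β | p.1 ∈ A ∧ p.2 ∈ B p.1}.indicator F (a, b) ∂ν =
      A.indicator (fun a ↦ ∫ b in B a, F (a, b) ∂ν) a := by
  by_cases ha : a ∈ A
  · have section_eq : Prod.mk a ⁻¹' {p : α × β | p.1 ∈ A ∧ p.2 ∈ B p.1} = B a := by
      ext b
      simp only [mem_preimage, mem_ofPred_eq, ha, true_and]
    have hB : MeasurableSet (B a) := section_eq ▸ measurable_prodMk_left hs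
    rw [indicator_of_mem ha, ← integral_indicator hB, ← section_eq]
    rfl
  · simp only [indicator, mem_ofPred_eq, ha, false_and, if_false, integral_zero]

variable [SFinite ν]

lemma integrableOn_integral_fibered (hA : MeasurableSet A)
    (hs : MeasurableSet {p : α × β | p.1 ∈ A ∧ p.2 ∈ B p.1})
    (hF : IntegrableOn F {p : α × β | p.1 ∈ A ∧ p.2 ∈ B p.1} (μ.prod ν)) :
    IntegrableOn (fun a ↦ ∫ b in B a, F (a, b) ∂ν) A μ := by
  have hint := ((integrable_indicator_iff hs).2 hF).integral_prod_left
  simp only [integral_indicator_fibered hs] at hint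
  exact (integrable_indicator_iff hA).1 hint

lemma setIntegral_fibered [SFinite μ] (hA : MeasurableSet A)
    (hs : MeasurableSet {p : α × β | p.1 ∈ A ∧ p.2 ∈ B p.1})
    (hF : IntegrableOn F {p : α × β | p.1 ∈ A ∧ p.2 ∈ B p.1} (μ.prod ν)) :
    ∫ p in {p : α × β | p.1 ∈ A ∧ p.2 ∈ B p.1}, F p ∂μ.prod ν =
      ∫ a in A, ∫ b in B a, F (a, b) ∂ν ∂μ := by
  rw [← integral_indicator hs, integral_prod _ ((integrable_indicator_iff hs).2 hF),
    ← integral_indicator hA]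
  simp only [integral_indicator_fibered hs]

end FiberedSet

/-- The open cube `(0, 2π)³`. -/
def cube : Set (ℝ × ℝ × ℝ) := Ioo 0 (2 * π) ×ˢ Ioo 0 (2 * π) ×ˢ Ioo 0 (2 * π)

/-- The part `x + y < z` of the cube. -/
def lowRegion : Set (ℝ × ℝ × ℝ) := {p | (p.1, p.2.2) ∈ triangle ∧ p.2.1 ∈ Ioo 0 (p.2.2 - p.1)}

/-- The reflection `(x, y, z) ↦ (2π - x, 2π - y, 2π - z)` of the cube. -/
def reflectCube : ℝ × ℝ × ℝ ≃ᵐ ℝ × ℝ × ℝ := MeasurableEquiv.subLeft (2 * π, 2 * π, 2 * π)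

/-- The part `0 ≤ x + y - z ≤ 2π` of the cube: the part `x + y - z > 2π` is the reflection of
`lowRegion`. -/
def midRegion : Set (ℝ × ℝ × ℝ) := cube \ (lowRegion ∪ reflectCube ⁻¹' lowRegion)

/-- The reordering `((x, z), y) ↦ (x, y, z)`, which makes `y` the fiber variable. -/
def insertMiddle : (ℝ × ℝ) × ℝ ≃ᵐ ℝ × ℝ × ℝ :=
  MeasurableEquiv.prodAssoc.trans ((MeasurableEquiv.refl ℝ).prodCongr MeasurableEquiv.prodComm)

lemma measurePreserving_insertMiddle : MeasurePreserving insertMiddle :=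
  ((MeasurePreserving.id volume).prod Measure.measurePreserving_swap).comp
    volume_preserving_prodAssoc

lemma reflectCube_apply (p : ℝ × ℝ × ℝ) :
    reflectCube p = (2 * π - p.1, 2 * π - p.2.1, 2 * π - p.2.2) := rfl

lemma measurePreserving_reflectCube : MeasurePreserving reflectCube :=
  haveI : Measure.IsAddHaarMeasure (volume : Measure (ℝ × ℝ × ℝ)) :=
    Measure.prod.instIsAddHaarMeasure _ _
  Measure.measurePreserving_sub_left volume _

lemma involutive_reflectCube : Function.Involutive reflectCube := fun p ↦ sub_sub_cancel _ p

lemma isOpen_lowRegion : IsOpen lowRegion :=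
  (isOpen_triangle.preimage (continuous_fst.prodMk continuous_snd.snd)).inter
    ((isOpen_lt continuous_const continuous_snd.fst).inter
      (isOpen_lt continuous_snd.fst (continuous_snd.snd.sub continuous_fst)))

lemma measurableSet_cube : MeasurableSet cube :=
  measurableSet_Ioo.prod (measurableSet_Ioo.prod measurableSet_Ioo)

lemma measurableSet_midRegion : MeasurableSet midRegion :=
  measurableSet_cube.diff (isOpen_lowRegion.measurableSet.union
    (reflectCube.measurable isOpen_lowRegion.measurableSet))

lemma II_cube_ae_eq : (II ×ˢ II ×ˢ II : Set (ℝ × ℝ × ℝ)) =ᵐ[volume] cube :=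
  Measure.set_prod_ae_eq II_ae_eq_Ioo II_prod_II_ae_eq

lemma lowRegion_subset_cube : lowRegion ⊆ cube := fun p ⟨h, hy⟩ ↦
  have hxz := triangle_subset_Ioo_prod h
  ⟨hxz.1, ⟨hy.1, by linarith [hy.2, hxz.1.1, hxz.2.2]⟩, hxz.2⟩

lemma reflectCube_preimage_lowRegion_subset_cube : reflectCube ⁻¹' lowRegion ⊆ cube := by
  intro p hp
  obtain ⟨⟨hx, hx'⟩, ⟨hy, hy'⟩, hz, hz'⟩ := lowRegion_subset_cube hp
  simp only [reflectCube_apply] at hx hx' hy hy' hz hz'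
  refine ⟨⟨?_, ?_⟩, ⟨?_, ?_⟩, ?_, ?_⟩ <;> linarith

lemma disjoint_lowRegion_reflectCube : Disjoint lowRegion (reflectCube ⁻¹' lowRegion) :=
  disjoint_left.2 fun p ⟨_, hy⟩ ⟨_, hy'⟩ ↦ by
    simp only [reflectCube_apply] at hy'
    linarith [hy.2, hy'.2, pi_pos]

lemma add_sub_mem_Icc_of_mem_midRegion {p : ℝ × ℝ × ℝ} (hp : p ∈ midRegion) :
    p.1 + p.2.1 - p.2.2 ∈ Icc 0 (2 * π) := by
  obtain ⟨⟨hx, hy, hz⟩, hnot⟩ := hp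
  refine ⟨le_of_not_gt fun hlow ↦ hnot (.inl ?_), le_of_not_gt fun hhigh ↦ hnot (.inr ?_)⟩
  · exact ⟨⟨hx.1, by linarith [hy.1], hz.2⟩, hy.1, by linarith⟩
  · rw [mem_preimage, reflectCube_apply]
    exact ⟨⟨sub_pos.2 hx.2, by linarith [hy.2], by linarith [hz.1]⟩, sub_pos.2 hy.2, by linarith⟩

section ShellIntegral

variable {f : ℝ → ℂ} {ε : ℝ}

lemma integrableOn_shellDensity (hf : Continuous f) (hε : ε ≠ 0) :
    IntegrableOn (shellDensity f ε) cube :=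
  (((continuous_shellDensity hf hε).continuousOn).integrableOn_compact
    (isCompact_Icc.prod (isCompact_Icc.prod isCompact_Icc))).mono_set
    (prod_mono Ioo_subset_Icc_self (prod_mono Ioo_subset_Icc_self Ioo_subset_Icc_self))

lemma shellDensity_reflectCube (hper : Function.Periodic f (2 * π)) (p : ℝ × ℝ × ℝ) :
    shellDensity f ε (reflectCube p) = shellDensity (fun x ↦ f (-x)) ε p := by
  simp only [shellDensity, reflectCube_apply, Omg_two_pi_sub, collision_two_pi_sub hper]

lemma setIntegral_shellDensity_eq_add (hf : Continuous f) (hper : Function.Periodic f (2 * π))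
    (hε : ε ≠ 0) :
    ∫ p in II ×ˢ II ×ˢ II, shellDensity f ε p =
      (∫ p in lowRegion, shellDensity f ε p) +
        (∫ p in lowRegion, shellDensity (fun x ↦ f (-x)) ε p) +
        ∫ p in midRegion, shellDensity f ε p := by
  have hint := integrableOn_shellDensity hf hε
  have outer_subset := union_subset lowRegion_subset_cube reflectCube_preimage_lowRegion_subset_cube
  rw [setIntegral_congr_set II_cube_ae_eq, ← integral_inter_add_sdiff
    (isOpen_lowRegion.measurableSet.union (reflectCube.measurable isOpen_lowRegion.measurableSet))
    hint, inter_eq_right.2 outer_subset, setIntegral_eq_add_setIntegral_comp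
      measurePreserving_reflectCube involutive_reflectCube isOpen_lowRegion.measurableSet
      disjoint_lowRegion_reflectCube (ae_eq_refl _) (hint.mono_set outer_subset)]
  simp only [shellDensity_reflectCube hper]
  rfl

lemma integrableOn_comp_insertMiddle (hf : Continuous f) (hε : ε ≠ 0) :
    IntegrableOn (shellDensity f ε ∘ insertMiddle) (insertMiddle ⁻¹' lowRegion) :=
  (measurePreserving_insertMiddle.integrableOn_comp_preimage insertMiddle.measurableEmbedding).2
    ((integrableOn_shellDensity hf hε).mono_set lowRegion_subset_cube)

lemma measurableSet_insertMiddle_preimage_lowRegion :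
    MeasurableSet (insertMiddle ⁻¹' lowRegion) :=
  insertMiddle.measurable isOpen_lowRegion.measurableSet

lemma integral_fiber_shellDensity {p : ℝ × ℝ} (hp : p ∈ triangle) :
    ∫ y in Ioo 0 (p.2 - p.1), (shellDensity f ε ∘ insertMiddle) (p, y) =
      ∫ y in 0..p.2 - p.1, shellDensity f ε (p.1, y, p.2) := by
  rw [intervalIntegral.integral_of_le (sub_nonneg.2 hp.2.1.le), integral_Ioc_eq_integral_Ioo]
  rfl

lemma integrableOn_integral_shellDensity (hf : Continuous f) (hε : ε ≠ 0) :
    IntegrableOn (fun p : ℝ × ℝ ↦ ∫ y in 0..p.2 - p.1, shellDensity f ε (p.1, y, p.2)) triangle :=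
  (integrableOn_integral_fibered (A := triangle) (B := fun p ↦ Ioo 0 (p.2 - p.1))
    (F := shellDensity f ε ∘ insertMiddle) isOpen_triangle.measurableSet
    measurableSet_insertMiddle_preimage_lowRegion (integrableOn_comp_insertMiddle hf hε)).congr_fun
    (fun _ hp ↦ integral_fiber_shellDensity hp) isOpen_triangle.measurableSet

lemma setIntegral_lowRegion_shellDensity (hf : Continuous f) (hε : ε ≠ 0) :
    ∫ p in lowRegion, shellDensity f ε p =
      ∫ p in triangle, ∫ y in 0..p.2 - p.1, shellDensity f ε (p.1, y, p.2) := by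
  rw [← measurePreserving_insertMiddle.setIntegral_preimage_emb insertMiddle.measurableEmbedding]
  exact (setIntegral_fibered (A := triangle) (B := fun p ↦ Ioo 0 (p.2 - p.1))
    (F := shellDensity f ε ∘ insertMiddle) isOpen_triangle.measurableSet
    measurableSet_insertMiddle_preimage_lowRegion (integrableOn_comp_insertMiddle hf hε)).trans
    (setIntegral_congr_fun isOpen_triangle.measurableSet fun _ hp ↦ integral_fiber_shellDensity hp)

end ShellIntegral

/-! ### The limit -/

lemma Omg_eq_of_mem_midRegion {p : ℝ × ℝ × ℝ} (hp : p ∈ midRegion) : Omg p.1 p.2.1 p.2.2 =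
    4 * sin ((p.1 + p.2.1) / 4) * sin ((p.1 - p.2.2) / 4) * sin ((p.2.1 - p.2.2) / 4) := by
  have fourth := add_sub_mem_Icc_of_mem_midRegion hp
  obtain ⟨x, y, z⟩ := p
  obtain ⟨⟨hx, hy, hz⟩, -⟩ := hp
  have product (a b c : ℝ) : sin (a + b - c) + sin (a - b + c) - sin (a - b - c) -
      sin (a + b + c) = 4 * sin a * sin b * sin c := by
    simp only [sin_add, sin_sub, cos_add, cos_sub]
    ring
  rw [Omg, omg_eq_sin_half (Ioo_subset_Icc_self hx), omg_eq_sin_half (Ioo_subset_Icc_self hy),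
    omg_eq_sin_half (Ioo_subset_Icc_self hz), omg_eq_sin_half fourth, ← product]
  ring_nf

lemma abs_le_two_pi_mul_abs_sin {t : ℝ} (ht : |t| ≤ 2 * π) : |t| ≤ 2 * π * |sin (t / 4)| := by
  have abs_quarter : |t / 4| = |t| / 4 := by rw [abs_div, abs_of_pos (zero_lt_four' ℝ)]
  calc |t| = 2 * π * (2 / π * |t / 4|) := by rw [abs_quarter]; field_simp; ring
    _ ≤ 2 * π * |sin (t / 4)| := by
      gcongr
      exact mul_abs_le_abs_sin (by linarith)

lemma sin_quarter_add_pos {p : ℝ × ℝ × ℝ} (hp : p ∈ cube) : 0 < sin ((p.1 + p.2.1) / 4) :=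
  sin_pos_of_pos_of_lt_pi (by linarith [hp.1.1, hp.2.1.1]) (by linarith [hp.1.2, hp.2.1.2])

lemma integrableOn_one_div_sin_quarter_add_cube :
    IntegrableOn (fun p : ℝ × ℝ × ℝ ↦ 1 / sin ((p.1 + p.2.1) / 4)) (II ×ˢ II ×ˢ II) := by
  have const_one : IntegrableOn (fun _ : ℝ ↦ (1 : ℝ)) II :=
    integrableOn_const measure_Ico_lt_top.ne
  have product := integrableOn_one_div_sin_quarter_add.mul_prod const_one
  simp only [mul_one, Measure.prod_restrict] at product
  rw [← volume_preserving_prodAssoc.integrableOn_comp_preimage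
    MeasurableEquiv.prodAssoc.measurableEmbedding]
  rw [MeasurableEquiv.prodAssoc, MeasurableEquiv.coe_mk, Equiv.prod_assoc_preimage]
  exact product

section Limits

variable {f : ℝ → ℂ} {K : NNReal}

lemma sin_quarter_add_mul_norm_collision_sq_le (hlip : LipschitzWith K f) {p : ℝ × ℝ × ℝ}
    (hp : p ∈ midRegion) :
    sin ((p.1 + p.2.1) / 4) * ‖collision f p.1 p.2.1 p.2.2‖ ^ 2 ≤
      4 * π ^ 2 * K ^ 2 * |Omg p.1 p.2.1 p.2.2| := by
  have hsin := sin_quarter_add_pos hp.1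
  have jordan {s t : ℝ} (hs : s ∈ Ioo 0 (2 * π)) (ht : t ∈ Ioo 0 (2 * π)) :
      |s - t| ≤ 2 * π * |sin ((s - t) / 4)| :=
    abs_le_two_pi_mul_abs_sin (abs_le.2 ⟨by linarith [hs.1, ht.2], by linarith [hs.2, ht.1]⟩)
  have hxz := jordan hp.1.1 hp.1.2.2
  have hyz := jordan hp.1.2.1 hp.1.2.2
  rw [Omg_eq_of_mem_midRegion hp, abs_mul, abs_mul, abs_mul, abs_of_pos hsin,
    abs_of_pos (zero_lt_four' ℝ)]
  calc _ ≤ sin ((p.1 + p.2.1) / 4) * (4 * K ^ 2 * ((2 * π * |sin ((p.1 - p.2.2) / 4)|) *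
          (2 * π * |sin ((p.2.1 - p.2.2) / 4)|))) := by
        gcongr
        exact (norm_collision_sq_le hlip _ _ _).trans (by gcongr)
    _ = _ := by ring

lemma shellDensity_le_of_mem_midRegion (hlip : LipschitzWith K f) {p : ℝ × ℝ × ℝ}
    (hp : p ∈ midRegion) {ε : ℝ} (hε : 0 < ε) :
    shellDensity f ε p ≤ 4 * π ^ 2 * K ^ 2 * (1 / sin ((p.1 + p.2.1) / 4)) := by
  set ω := Omg p.1 p.2.1 p.2.2 with hω
  rw [mul_one_div, le_div_iff₀ (sin_quarter_add_pos hp.1), shellDensity, ← hω]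
  calc deltaE ε ω * ‖collision f p.1 p.2.1 p.2.2‖ ^ 2 * sin ((p.1 + p.2.1) / 4)
      = deltaE ε ω * (sin ((p.1 + p.2.1) / 4) * ‖collision f p.1 p.2.1 p.2.2‖ ^ 2) := by ring
    _ ≤ deltaE ε ω * (4 * π ^ 2 * K ^ 2 * |ω|) :=
        mul_le_mul_of_nonneg_left (sin_quarter_add_mul_norm_collision_sq_le hlip hp)
          (deltaE_nonneg hε.le ω)
    _ = 4 * π ^ 2 * K ^ 2 * (deltaE ε ω * |ω|) := by ring
    _ ≤ 4 * π ^ 2 * K ^ 2 := mul_le_of_le_one_right (by positivity) (deltaE_mul_abs_le_one hε ω)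

lemma tendsto_shellDensity_of_mem_midRegion (hlip : LipschitzWith K f) {p : ℝ × ℝ × ℝ}
    (hp : p ∈ midRegion) : Tendsto (fun ε ↦ shellDensity f ε p) (𝓝[>] 0) (𝓝 0) := by
  rcases eq_or_ne (Omg p.1 p.2.1 p.2.2) 0 with hΩ | hΩ
  · have hle := sin_quarter_add_mul_norm_collision_sq_le hlip hp
    rw [hΩ, abs_zero, mul_zero] at hle
    have collision_eq : ‖collision f p.1 p.2.1 p.2.2‖ ^ 2 = 0 :=
      le_antisymm (nonpos_of_mul_nonpos_right hle (sin_quarter_add_pos hp.1)) (sq_nonneg _)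
    simp only [shellDensity, collision_eq, mul_zero, tendsto_const_nhds]
  · simpa only [shellDensity, zero_mul] using (tendsto_deltaE hΩ).mul_const _

lemma tendsto_setIntegral_midRegion (hlip : LipschitzWith K f) :
    Tendsto (fun ε ↦ ∫ p in midRegion, shellDensity f ε p) (𝓝[>] 0) (𝓝 0) := by
  have midRegion_subset : midRegion ⊆ II ×ˢ II ×ˢ II := sdiff_subset.trans
    (prod_mono Ioo_subset_Ico_self (prod_mono Ioo_subset_Ico_self Ioo_subset_Ico_self))
  have lim : Tendsto (fun ε ↦ ∫ p in midRegion, shellDensity f ε p) (𝓝[>] 0)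
      (𝓝 (∫ _ in midRegion, 0)) := by
    refine tendsto_integral_filter_of_dominated_convergence
      (fun p ↦ 4 * π ^ 2 * K ^ 2 * (1 / sin ((p.1 + p.2.1) / 4))) ?_ ?_
      ((integrableOn_one_div_sin_quarter_add_cube.mono_set midRegion_subset).const_mul _) ?_
    · filter_upwards [self_mem_nhdsWithin] with ε hε
      exact (continuous_shellDensity hlip.continuous (ne_of_gt hε)).aestronglyMeasurable
    · filter_upwards [self_mem_nhdsWithin] with ε hε
      filter_upwards [ae_restrict_mem measurableSet_midRegion] with p hp
      rw [norm_of_nonneg (shellDensity_nonneg f (le_of_lt hε) p)]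
      exact shellDensity_le_of_mem_midRegion hlip hp hε
    · filter_upwards [ae_restrict_mem measurableSet_midRegion] with p hp
      exact tendsto_shellDensity_of_mem_midRegion hlip hp
  rwa [integral_zero] at lim

lemma tendsto_setIntegral_lowRegion (hper : Function.Periodic f (2 * π))
    (hlip : LipschitzWith K f) :
    Tendsto (fun ε ↦ ∫ p in lowRegion, shellDensity f ε p) (𝓝[>] 0)
      (𝓝 (4 * resonantForm f)) := by
  have triangle_finite : volume triangle ≠ ∞ :=
    measure_ne_top_of_subset triangle_subset_Ioo_prod
      (by simp [Measure.volume_eq_prod, ENNReal.mul_eq_top])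
  rw [← setIntegral_triangle_limitDensity hper, ← integral_const_mul]
  have lim : Tendsto
      (fun ε ↦ ∫ p in triangle, ∫ y in 0..p.2 - p.1, shellDensity f ε (p.1, y, p.2)) (𝓝[>] 0)
      (𝓝 (∫ p in triangle, 4 * limitDensity f p)) := by
    refine tendsto_integral_filter_of_dominated_convergence (fun _ ↦ 16 * π ^ 2 * K ^ 2) ?_ ?_
      (integrableOn_const triangle_finite) ?_
    · filter_upwards [self_mem_nhdsWithin] with ε hε
      exact (integrableOn_integral_shellDensity hlip.continuous (ne_of_gt hε)).1
    · filter_upwards [self_mem_nhdsWithin] with ε hε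
      filter_upwards [ae_restrict_mem isOpen_triangle.measurableSet] with p hp
      exact norm_integral_shellDensity_le hper hlip hp hε
    · filter_upwards [ae_restrict_mem isOpen_triangle.measurableSet] with p hp
      exact tendsto_integral_shellDensity hlip.continuous hp
  refine lim.congr' ?_
  filter_upwards [self_mem_nhdsWithin] with ε hε
  exact (setIntegral_lowRegion_shellDensity hlip.continuous (ne_of_gt hε)).symm

theorem tendsto_setIntegral_shellDensity (hper : Function.Periodic f (2 * π))
    (hlip : LipschitzWith K f) :
    Tendsto (fun ε ↦ 1 / 4 * ∫ p in II ×ˢ II ×ˢ II, shellDensity f ε p) (𝓝[>] 0)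
      (𝓝 (Elim f)) := by
  have hlip_neg : LipschitzWith K fun x ↦ f (-x) :=
    mul_one K ▸ hlip.comp LipschitzWith.id.neg
  have lim := (((tendsto_setIntegral_lowRegion hper hlip).add
    (tendsto_setIntegral_lowRegion (periodic_comp_neg hper) hlip_neg)).add
    (tendsto_setIntegral_midRegion hlip)).const_mul (1 / 4)
  have value : 1 / 4 * (4 * resonantForm f + 4 * resonantForm (fun x ↦ f (-x)) + 0) = Elim f := by
    rw [resonantForm_neg hper, Elim_eq_two_mul_resonantForm hlip.continuous hper]
    ring
  rw [value] at lim
  refine lim.congr' ?_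
  filter_upwards [self_mem_nhdsWithin] with ε hε
  rw [setIntegral_shellDensity_eq_add hlip.continuous hper (ne_of_gt hε)]

end Limits

/-- **Proposition 3.1.**  For `2π`-periodic Lipschitz `f : ℝ → ℂ`, the quadratic form
`⟨f, L_ε f⟩ = (1/4)∫_{I³} δ_ε(Ω)|f(x)+f(y)−f(z)−f(x+y−z)|²` converges as `ε → 0⁺` to a
finite non-negative limit given by `Elim f`, which moreover equals
`∫_I V|f|² + ∫_{I²} f(x)* (K₁(x,z) − 2K₂(x,z)) f(z) dx dz`. -/
theorem quadratic_form_limit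
    (f : ℝ → ℂ) (K : NNReal) (hper : Function.Periodic f (2 * π))
    (hlip : LipschitzWith K f) :
    Tendsto
      (fun ε : ℝ =>
        (1 / 4) * ∫ p in II ×ˢ II ×ˢ II,
          deltaE ε (Omg p.1 p.2.1 p.2.2) *
            ‖f p.1 + f p.2.1 - f p.2.2 - f (p.1 + p.2.1 - p.2.2)‖ ^ 2)
      (𝓝[>] (0 : ℝ)) (𝓝 (Elim f)) ∧
    0 ≤ Elim f ∧
    IntegrableOn
      (fun p : ℝ × ℝ =>
        (1 / (2 * Real.sqrt (Fp p.1 p.2))) *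
          ‖f p.1 + f (hFPU p.1 p.2) - f p.2 - f (p.1 - p.2 + hFPU p.1 p.2)‖ ^ 2)
      (II ×ˢ II) ∧
    (Elim f : ℂ)
      = ((∫ x in II, VV x * ‖f x‖ ^ 2 : ℝ) : ℂ) +
        ∫ p in II ×ˢ II,
          (starRingEnd ℂ) (f p.1) * ((K1 p.1 p.2 - 2 * K2 p.1 p.2 : ℝ) : ℂ) * f p.2 := by
  refine ⟨tendsto_setIntegral_shellDensity hper hlip, integral_nonneg fun p ↦ by positivity, ?_,
    Elim_eq_kernel_form hlip.continuous hper⟩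
  exact (integrableOn_limitDensity hlip.continuous hper).congr_fun
    (fun p hp ↦ (Elim_integrand_eq_limitDensity f hp).symm)
    (measurableSet_Ico.prod measurableSet_Ico)
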